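/- Assume p ≥ 5 if α ∈ (0,1] and p ≥ 7 if α ∈ (1,∞). Then there exists δ > 0 such that for every φ ∈ ℓ²(Z) with ‖φ‖_{ℓ²} < δ there exists a global solution u of the focusing nonlinear lattice equation with initial datum φ, and there exists a unique asymptotic state u₊ ∈ ℓ²(Z) with ‖u₊‖_{ℓ²} = ‖φ‖_{ℓ²} such that ‖u(t) − U(t) u₊‖_{ℓ²(Z)} → 0 as t → ∞. -/

import Mathlib

open scoped BigOperators ENNReal
open Filter Topology MeasureTheory

noncomputable section

/-- The symbol `σ(ξ) = Σ_{k=1}^∞ sin²(kξ/2) / k^{1+α}` for `J_k = k^{-(1+α)}` on `ℤ`. -/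
def sigma1 (α : ℝ) (ξ : ℝ) : ℝ :=
  ∑' k : ℕ, Real.sin (((k : ℝ) + 1) * ξ / 2) ^ 2 / ((k : ℝ) + 1) ^ (1 + α)

/-- The kernel `(K_t)_n = (1/(2π)) ∫_{-π}^{π} e^{i(nξ - σ(ξ)t)} dξ`. -/
def Kker (α t : ℝ) (n : ℤ) : ℂ :=
  (2 * Real.pi)⁻¹ •
    ∫ ξ in (-Real.pi)..Real.pi, Complex.exp (Complex.I * (((n : ℝ) * ξ - sigma1 α ξ * t) : ℝ))

/-- The propagator `(U(t)φ)_n = Σ_m (K_t)_{n-m} φ_m`. -/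
def Uprop (α t : ℝ) (φ : ℤ → ℂ) (n : ℤ) : ℂ :=
  ∑' m : ℤ, Kker α t (n - m) * φ m

/-- `u : [0,∞) → ℓ²(ℤ)` is a global solution of `i u̇ = Lu - |u|^{p-1}u` with initial
datum `φ`, in the Duhamel sense: `u(t) ∈ ℓ²` for all `t ≥ 0`, `t ↦ u(t)` is `ℓ²`-continuous
on `[0,∞)`, and `u(t) = U(t)φ + i ∫_0^t U(t-s)(|u(s)|^{p-1} u(s)) ds`. -/
def IsGlobalSolution (α p : ℝ) (φ : ℤ → ℂ) (u : ℝ → ℤ → ℂ) : Prop :=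
  (∀ t : ℝ, 0 ≤ t → Summable fun n : ℤ => ‖u t n‖ ^ 2) ∧
  (∀ t₀ : ℝ, 0 ≤ t₀ →
    Tendsto (fun t : ℝ => ∑' n : ℤ, ‖u t n - u t₀ n‖ ^ 2)
      (nhdsWithin t₀ (Set.Ici 0)) (𝓝 0)) ∧
  (∀ t : ℝ, 0 ≤ t → ∀ n : ℤ,
    u t n = Uprop α t φ n +
      Complex.I *
        ∫ s in (0 : ℝ)..t, Uprop α (t - s) (fun m => (‖u s m‖ ^ (p - 1) : ℝ) * u s m) n)

/-!
Write `u(t) = U(t) v(t)`. In this interaction picture the equation becomes the ordinary differential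
equation `v' = i U(-t) (|U(t) v|^(p-1) U(t) v)` in `ℓ²(ℤ)`, whose vector field is locally Lipschitz
and orthogonal to `v`; hence `‖v(t)‖ = ‖φ‖` and the flow is global. Scattering means that `v(t)` has
a limit.

Two oscillatory-integral estimates of van der Corput type give `‖K_t‖_∞ ≲ |t|^(-ρ)`, with `ρ = 1/2`
for `α ≤ 1` and `ρ = 1/3` for `α > 1`. By the `TT*` argument and the discrete
Hardy–Littlewood–Sobolev inequality, this bounds the `ℓ^(r+2)` norm, `ρ = 2/(r+2)`, of the numbers
`f_k = ‖u‖_(L^∞([k,k+1]; ℓ^∞))` by the norm of the initial value plus the total variation of `v`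
along the times where these suprema are almost attained. Since `‖v'‖ ≤ ‖φ‖ f_k^(p-1)` on `[k,k+1]`
and `p - 1 ≥ r + 2`, that variation is in turn controlled by `‖φ‖ ∑ f_k^(r+2)`. For small `‖φ‖` the
circle closes: `∑ f_k^(r+2)` is finite, so `v` has finite length and converges.
-/

/-! ### Oscillatory integrals and van der Corput's tests -/

section OscillatoryIntegrals

/-- The oscillatory integral `∫ₐᵇ e^{i f(x)} dx` with real phase `f`. -/
def oscInt (f : ℝ → ℝ) (a b : ℝ) : ℂ :=
  ∫ x in a..b, Complex.exp (Complex.I * (f x : ℝ))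

/-- `f` is of class `C²` on `s` with derivatives `f'` and `f''`: the regularity of the phases in
van der Corput's tests. The derivatives are explicit, and `HasDerivAt` is two-sided also at
boundary points of `s`. -/
structure HasDeriv2On (f f' f'' : ℝ → ℝ) (s : Set ℝ) : Prop where
  hasDerivAt : ∀ x ∈ s, HasDerivAt f (f' x) x
  hasDerivAt_deriv : ∀ x ∈ s, HasDerivAt f' (f'' x) x
  continuousOn_deriv2 : ContinuousOn f'' s

variable {f f' f'' : ℝ → ℝ} {s : Set ℝ} {a b : ℝ}

namespace HasDeriv2On

lemma continuousOn (h : HasDeriv2On f f' f'' s) : ContinuousOn f s :=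
  HasDerivAt.continuousOn h.hasDerivAt

lemma continuousOn_deriv (h : HasDeriv2On f f' f'' s) : ContinuousOn f' s :=
  HasDerivAt.continuousOn h.hasDerivAt_deriv

lemma mono {t : Set ℝ} (h : HasDeriv2On f f' f'' s) (hts : t ⊆ s) : HasDeriv2On f f' f'' t :=
  ⟨fun x hx => h.hasDerivAt x (hts hx), fun x hx => h.hasDerivAt_deriv x (hts hx),
    h.continuousOn_deriv2.mono hts⟩

lemma neg (h : HasDeriv2On f f' f'' s) :
    HasDeriv2On (fun x => -f x) (fun x => -f' x) (fun x => -f'' x) s :=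
  ⟨fun x hx => (h.hasDerivAt x hx).neg, fun x hx => (h.hasDerivAt_deriv x hx).neg,
    h.continuousOn_deriv2.neg⟩

lemma comp_neg (h : HasDeriv2On f f' f'' s) :
    HasDeriv2On (fun x => f (-x)) (fun x => -f' (-x)) (fun x => f'' (-x)) (-s) := by
  refine ⟨fun x hx => ?_, fun x hx => ?_,
    h.continuousOn_deriv2.comp continuous_neg.continuousOn fun x hx => hx⟩
  · exact ((h.hasDerivAt (-x) hx).comp x (hasDerivAt_neg x)).congr_deriv (by ring)
  · exact ((h.hasDerivAt_deriv (-x) hx).comp x (hasDerivAt_neg x)).neg.congr_deriv (by ring)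

lemma linear_sub_mul (h : HasDeriv2On f f' f'' s) (c t : ℝ) :
    HasDeriv2On (fun x => c * x - f x * t) (fun x => c - f' x * t) (fun x => -(f'' x * t)) s :=
  ⟨fun x hx => ((hasDerivAt_id x).const_mul c |>.congr_deriv (mul_one c)).sub
      ((h.hasDerivAt x hx).mul_const t),
    fun x hx => ((h.hasDerivAt_deriv x hx).mul_const t).const_sub c,
    (h.continuousOn_deriv2.mul continuousOn_const).neg⟩

lemma mul_sub_le_deriv_sub (h : HasDeriv2On f f' f'' (Set.Icc a b)) {l : ℝ}
    (hlow : ∀ x ∈ Set.Icc a b, l ≤ f'' x) :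
    ∀ x y, a ≤ x → x ≤ y → y ≤ b → l * (y - x) ≤ f' y - f' x := fun x y hx hxy hy =>
  (convex_Icc a b).mul_sub_le_image_sub_of_le_deriv h.continuousOn_deriv
    (fun z hz =>
      (h.hasDerivAt_deriv z (interior_subset hz)).differentiableAt.differentiableWithinAt)
    (fun z hz => (h.hasDerivAt_deriv z (interior_subset hz)).deriv ▸ hlow z (interior_subset hz))
    x ⟨hx, hxy.trans hy⟩ y ⟨hx.trans hxy, hy⟩ hxy

end HasDeriv2On

lemma intervalIntegrable_exp_I_mul (hf : ContinuousOn f (Set.uIcc a b)) :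
    IntervalIntegrable (fun x => Complex.exp (Complex.I * (f x : ℝ))) volume a b :=
  ContinuousOn.intervalIntegrable (by fun_prop)

lemma norm_oscInt_le_abs_sub (f : ℝ → ℝ) (a b : ℝ) : ‖oscInt f a b‖ ≤ |b - a| := by
  simpa [oscInt] using intervalIntegral.norm_integral_le_of_norm_le_const (a := a) (b := b) (C := 1)
    fun x _ => (Complex.norm_exp_I_mul_ofReal (f x)).le

lemma norm_oscInt_neg (f : ℝ → ℝ) (a b : ℝ) : ‖oscInt (fun x => -f x) a b‖ = ‖oscInt f a b‖ := by
  have hconj : ∀ x, Complex.exp (Complex.I * ((-f x : ℝ) : ℂ)) =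
      (starRingEnd ℂ) (Complex.exp (Complex.I * (f x : ℂ))) := fun x => by
    simp [← Complex.exp_conj]
  simp only [oscInt, hconj, intervalIntegral.intervalIntegral_conj, Complex.norm_conj]

lemma oscInt_comp_neg (f : ℝ → ℝ) (a b : ℝ) :
    oscInt (fun x => f (-x)) a b = oscInt f (-b) (-a) :=
  intervalIntegral.integral_comp_neg fun x => Complex.exp (Complex.I * (f x : ℝ))

lemma oscInt_add_adjacent {c : ℝ} (hf : ContinuousOn f (Set.Icc a b)) (hc : c ∈ Set.Icc a b) :
    oscInt f a c + oscInt f c b = oscInt f a b := by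
  refine intervalIntegral.integral_add_adjacent_intervals
    (intervalIntegrable_exp_I_mul (hf.mono ?_)) (intervalIntegrable_exp_I_mul (hf.mono ?_))
  · exact Set.uIcc_of_le hc.1 ▸ Set.Icc_subset_Icc_right hc.2
  · exact Set.uIcc_of_le hc.2 ▸ Set.Icc_subset_Icc_left hc.1

lemma tendsto_oscInt {ι : Type*} {l : Filter ι} [l.IsCountablyGenerated] {F : ι → ℝ → ℝ}
    (hF : ∀ᶠ i in l, ContinuousOn (F i) (Set.uIcc a b))
    (hlim : ∀ x ∈ Set.uIcc a b, Tendsto (fun i => F i x) l (𝓝 (f x))) :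
    Tendsto (fun i => oscInt (F i) a b) l (𝓝 (oscInt f a b)) := by
  refine intervalIntegral.tendsto_integral_filter_of_dominated_convergence (fun _ => (1 : ℝ))
    (hF.mono fun i hi => (intervalIntegrable_exp_I_mul hi).def'.aestronglyMeasurable)
    (Eventually.of_forall fun i => Eventually.of_forall fun x _ =>
      (Complex.norm_exp_I_mul_ofReal _).le) intervalIntegrable_const
    (Eventually.of_forall fun x hx => ?_)
  have hexp : Continuous fun y : ℝ => Complex.exp (Complex.I * (y : ℂ)) := by fun_prop
  exact (hexp.tendsto _).comp (hlim x (Set.uIoc_subset_uIcc hx))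

lemma norm_oscInt_le_of_off_pivot {c d M : ℝ} (hf : ContinuousOn f (Set.Icc a b))
    (hc : c ∈ Set.Icc a b) (hd : 0 ≤ d) (hM : 0 ≤ M)
    (hleft : a ≤ c - d → ‖oscInt f a (c - d)‖ ≤ M)
    (hright : c + d ≤ b → ‖oscInt f (c + d) b‖ ≤ M) :
    ‖oscInt f a b‖ ≤ 2 * M + 2 * d := by
  set x := max a (c - d) with hx
  set y := min b (c + d) with hy
  have hxc : x ≤ c := max_le hc.1 (by linarith)
  have hcy : c ≤ y := le_min hc.2 (by linarith)
  have hxI : x ∈ Set.Icc a b := ⟨le_max_left _ _, hxc.trans hc.2⟩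
  have hyI : y ∈ Set.Icc x b := ⟨hxc.trans hcy, min_le_left _ _⟩
  have hbound_left : ‖oscInt f a x‖ ≤ M := by
    rcases le_total a (c - d) with h | h
    · rw [hx, max_eq_right h]; exact hleft h
    · rw [hx, max_eq_left h]; simpa [oscInt] using hM
  have hbound_right : ‖oscInt f y b‖ ≤ M := by
    rcases le_total b (c + d) with h | h
    · rw [hy, min_eq_left h]; simpa [oscInt] using hM
    · rw [hy, min_eq_right h]; exact hright h
  have hbound_mid : ‖oscInt f x y‖ ≤ 2 * d := by
    refine (norm_oscInt_le_abs_sub f x y).trans ?_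
    rw [abs_of_nonneg (sub_nonneg.2 hyI.1)]
    linarith [le_max_right a (c - d), min_le_right b (c + d)]
  rw [← oscInt_add_adjacent hf hxI,
    ← oscInt_add_adjacent (hf.mono (Set.Icc_subset_Icc_left hxI.1)) hyI, ← add_assoc]
  linarith [norm_add₃_le (a := oscInt f a x) (b := oscInt f x y) (c := oscInt f y b)]

lemma exists_pivot_of_mul_sub_le {g : ℝ → ℝ} {l : ℝ} (hg : ContinuousOn g (Set.Icc a b))
    (hab : a ≤ b) (hmono : ∀ x y, a ≤ x → x ≤ y → y ≤ b → l * (y - x) ≤ g y - g x) :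
    ∃ c ∈ Set.Icc a b, (∀ x ∈ Set.Icc a b, x < c → g x ≤ l * (x - c)) ∧
      ∀ x ∈ Set.Icc a b, c < x → l * (x - c) ≤ g x := by
  rcases le_or_gt 0 (g a) with ha | ha
  · exact ⟨a, ⟨le_rfl, hab⟩, fun x hx hxa => absurd hx.1 (not_le.2 hxa), fun x hx _ => by
      linarith [hmono a x le_rfl hx.1 hx.2]⟩
  rcases le_or_gt (g b) 0 with hb | hb
  · exact ⟨b, ⟨hab, le_rfl⟩, fun x hx _ => by linarith [hmono x b hx.1 hx.2 le_rfl],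
      fun x hx hxb => absurd hx.2 (not_le.2 hxb)⟩
  obtain ⟨c, hcI, hc⟩ := intermediate_value_Icc hab hg ⟨ha.le, hb.le⟩
  exact ⟨c, hcI, fun x hx hxc => by linarith [hmono x c hx.1 hxc.le hcI.2],
    fun x hx hxc => by linarith [hmono c x hcI.1 hxc.le hx.2]⟩

lemma HasDeriv2On.hasDerivAt_inv_deriv (h : HasDeriv2On f f' f'' s) (hne : ∀ x ∈ s, f' x ≠ 0) :
    ∀ x ∈ s, HasDerivAt (fun x => (f' x)⁻¹) (-f'' x / f' x ^ 2) x := fun x hx =>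
  (h.hasDerivAt_deriv x hx).inv (hne x hx)

lemma HasDeriv2On.continuousOn_div_sq (h : HasDeriv2On f f' f'' s) (hne : ∀ x ∈ s, f' x ≠ 0) :
    ContinuousOn (fun x => -f'' x / f' x ^ 2) s :=
  h.continuousOn_deriv2.neg.div (h.continuousOn_deriv.pow 2) fun x hx => pow_ne_zero 2 (hne x hx)

lemma I_mul_oscInt_eq (h : HasDeriv2On f f' f'' (Set.uIcc a b))
    (hne : ∀ x ∈ Set.uIcc a b, f' x ≠ 0) :
    Complex.I * oscInt f a b =
      ((f' b)⁻¹ : ℝ) * Complex.exp (Complex.I * (f b : ℝ)) -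
        ((f' a)⁻¹ : ℝ) * Complex.exp (Complex.I * (f a : ℝ)) -
        ∫ x in a..b, ((-f'' x / f' x ^ 2 : ℝ) : ℂ) * Complex.exp (Complex.I * (f x : ℝ)) := by
  have hf := h.continuousOn
  have hf' := h.continuousOn_deriv
  have hparts := intervalIntegral.integral_mul_deriv_eq_deriv_mul
    (fun x hx => (h.hasDerivAt_inv_deriv hne x hx).ofReal_comp)
    (fun x hx => ((h.hasDerivAt x hx).ofReal_comp.const_mul Complex.I).cexp)
    (Complex.continuous_ofReal.comp_continuousOn (h.continuousOn_div_sq hne)).intervalIntegrable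
    (ContinuousOn.intervalIntegrable (by fun_prop))
  rw [← hparts, oscInt, ← intervalIntegral.integral_const_mul]
  refine intervalIntegral.integral_congr fun x hx => ?_
  have : (f' x : ℂ) ≠ 0 := Complex.ofReal_ne_zero.2 (hne x hx)
  simp only [Complex.ofReal_inv]
  field_simp

lemma norm_oscInt_le_of_le_deriv {μ : ℝ} (h : HasDeriv2On f f' f'' (Set.Icc a b)) (hab : a ≤ b)
    (hμ : 0 < μ) (hconv : ∀ x ∈ Set.Icc a b, 0 ≤ f'' x) (hlow : ∀ x ∈ Set.Icc a b, μ ≤ f' x) :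
    ‖oscInt f a b‖ ≤ 2 / μ := by
  have hpos : ∀ x ∈ Set.Icc a b, 0 < f' x := fun x hx => hμ.trans_le (hlow x hx)
  have hne : ∀ x ∈ Set.Icc a b, f' x ≠ 0 := fun x hx => (hpos x hx).ne'
  have hcont := h.continuousOn_div_sq hne
  have hinv := h.hasDerivAt_inv_deriv hne
  have hnorm : ∀ r x : ℝ, ‖(r : ℂ) * Complex.exp (Complex.I * (f x : ℝ))‖ = |r| := fun r x => by
    rw [norm_mul, Complex.norm_exp_I_mul_ofReal, mul_one, Complex.norm_real, Real.norm_eq_abs]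
  have hparts := I_mul_oscInt_eq (Set.uIcc_of_le hab ▸ h) (Set.uIcc_of_le hab ▸ hne)
  rw [← Set.uIcc_of_le hab] at hcont hinv
  have hrest : ‖∫ x in a..b, ((-f'' x / f' x ^ 2 : ℝ) : ℂ) * Complex.exp (Complex.I * (f x : ℝ))‖
      ≤ (f' a)⁻¹ - (f' b)⁻¹ := by
    calc _ ≤ ∫ x in a..b, -(-f'' x / f' x ^ 2) := by
          refine intervalIntegral.norm_integral_le_of_norm_le hab
            (Eventually.of_forall fun x hx => ?_) hcont.neg.intervalIntegrable
          rw [hnorm, neg_div, abs_neg, neg_neg, abs_of_nonneg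
            (div_nonneg (hconv x (Set.Ioc_subset_Icc_self hx)) (sq_nonneg _))]
      _ = (f' a)⁻¹ - (f' b)⁻¹ := by
          rw [intervalIntegral.integral_neg, intervalIntegral.integral_eq_sub_of_hasDerivAt hinv
            hcont.intervalIntegrable, neg_sub]
  have ha := hpos a ⟨le_rfl, hab⟩
  have hb := hpos b ⟨hab, le_rfl⟩
  have hinv_a : (f' a)⁻¹ ≤ μ⁻¹ := inv_anti₀ hμ (hlow a ⟨le_rfl, hab⟩)
  calc ‖oscInt f a b‖ = ‖Complex.I * oscInt f a b‖ := by simp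
    _ ≤ (f' b)⁻¹ + (f' a)⁻¹ + ((f' a)⁻¹ - (f' b)⁻¹) := by
        rw [hparts]
        refine (norm_sub_le _ _).trans (add_le_add ((norm_sub_le _ _).trans_eq ?_) hrest)
        rw [hnorm, hnorm, abs_of_pos (inv_pos.2 ha), abs_of_pos (inv_pos.2 hb)]
    _ ≤ 2 / μ := by rw [div_eq_mul_inv]; linarith

lemma norm_oscInt_le_of_deriv_le_neg {μ : ℝ} (h : HasDeriv2On f f' f'' (Set.Icc a b))
    (hab : a ≤ b) (hμ : 0 < μ) (hconv : ∀ x ∈ Set.Icc a b, 0 ≤ f'' x)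
    (hup : ∀ x ∈ Set.Icc a b, f' x ≤ -μ) :
    ‖oscInt f a b‖ ≤ 2 / μ := by
  have hI : ∀ x ∈ Set.Icc (-b) (-a), -x ∈ Set.Icc a b := fun x hx =>
    ⟨by linarith [hx.2], by linarith [hx.1]⟩
  have := norm_oscInt_le_of_le_deriv (h.comp_neg.mono hI) (neg_le_neg hab) hμ
    (fun x hx => hconv _ (hI x hx)) (fun x hx => le_neg_of_le_neg (hup _ (hI x hx)))
  rwa [oscInt_comp_neg, neg_neg, neg_neg] at this

lemma norm_oscInt_le_of_le_deriv2 {l : ℝ} (h : HasDeriv2On f f' f'' (Set.Icc a b)) (hab : a ≤ b)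
    (hl : 0 < l) (hlow : ∀ x ∈ Set.Icc a b, l ≤ f'' x) :
    ‖oscInt f a b‖ ≤ 6 / Real.sqrt l := by
  obtain ⟨c, hcI, hleft, hright⟩ :=
    exists_pivot_of_mul_sub_le h.continuousOn_deriv hab (h.mul_sub_le_deriv_sub hlow)
  have hs : 0 < Real.sqrt l := Real.sqrt_pos.2 hl
  have hld : l * (1 / Real.sqrt l) = Real.sqrt l := by rw [mul_one_div, Real.div_sqrt]
  have hconv : ∀ x ∈ Set.Icc a b, 0 ≤ f'' x := fun x hx => hl.le.trans (hlow x hx)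
  have hd : 0 < 1 / Real.sqrt l := by positivity
  refine (norm_oscInt_le_of_off_pivot (M := 2 / Real.sqrt l) h.continuousOn hcI hd.le
    (by positivity) (fun hac => ?_) (fun hcb => ?_)).trans_eq (by ring)
  · have hI := Set.Icc_subset_Icc_right (b := a) (show c - 1 / Real.sqrt l ≤ b by linarith [hcI.2])
    refine norm_oscInt_le_of_deriv_le_neg (h.mono hI) hac hs (fun x hx => hconv x (hI hx))
      fun x hx => (hleft x (hI hx) (by linarith [hx.2])).trans ?_
    rw [← hld, ← mul_neg]
    exact mul_le_mul_of_nonneg_left (by linarith [hx.2]) hl.le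
  · have hI := Set.Icc_subset_Icc_left (b := b) (show a ≤ c + 1 / Real.sqrt l by linarith [hcI.1])
    refine norm_oscInt_le_of_le_deriv (h.mono hI) hcb hs (fun x hx => hconv x (hI hx))
      fun x hx => le_trans ?_ (hright x (hI hx) (by linarith [hx.1]))
    rw [← hld]
    exact mul_le_mul_of_nonneg_left (by linarith [hx.1]) hl.le

lemma norm_oscInt_le_of_deriv2_le_neg {l : ℝ} (h : HasDeriv2On f f' f'' (Set.Icc a b))
    (hab : a ≤ b) (hl : 0 < l) (hup : ∀ x ∈ Set.Icc a b, f'' x ≤ -l) :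
    ‖oscInt f a b‖ ≤ 6 / Real.sqrt l := by
  rw [← norm_oscInt_neg]
  exact norm_oscInt_le_of_le_deriv2 h.neg hab hl fun x hx => le_neg_of_le_neg (hup x hx)

-- Within `d` of the zero of `f''` the integral is bounded trivially; outside, `|f''| ≥ l * d`.
lemma norm_oscInt_le_of_mul_sub_le_deriv2_sub {l d : ℝ} (h : HasDeriv2On f f' f'' (Set.Icc a b))
    (hab : a ≤ b) (hl : 0 < l) (hd : 0 < d)
    (hmono : ∀ x y, a ≤ x → x ≤ y → y ≤ b → l * (y - x) ≤ f'' y - f'' x) :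
    ‖oscInt f a b‖ ≤ 2 * (6 / Real.sqrt (l * d)) + 2 * d := by
  obtain ⟨c, hcI, hleft, hright⟩ := exists_pivot_of_mul_sub_le h.continuousOn_deriv2 hab hmono
  refine norm_oscInt_le_of_off_pivot h.continuousOn hcI hd.le (by positivity)
    (fun hac => ?_) (fun hcb => ?_)
  · have hI := Set.Icc_subset_Icc_right (b := a) (show c - d ≤ b by linarith [hcI.2])
    refine norm_oscInt_le_of_deriv2_le_neg (h.mono hI) hac (by positivity)
      fun x hx => (hleft x (hI hx) (by linarith [hx.2])).trans ?_
    rw [← mul_neg]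
    exact mul_le_mul_of_nonneg_left (by linarith [hx.2]) hl.le
  · have hI := Set.Icc_subset_Icc_left (b := b) (show a ≤ c + d by linarith [hcI.1])
    exact norm_oscInt_le_of_le_deriv2 (h.mono hI) hcb (by positivity)
      fun x hx => le_trans (mul_le_mul_of_nonneg_left (by linarith [hx.1]) hl.le)
        (hright x (hI hx) (by linarith [hx.1]))

end OscillatoryIntegrals

/-! ### The symbol and the reduction of the kernel bound to an oscillatory integral -/

section Symbol

lemma summable_one_div_add_one_rpow {α : ℝ} (hα : 0 < α) :
    Summable fun k : ℕ => 1 / ((k : ℝ) + 1) ^ (1 + α) := by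
  have hp : 1 < 1 + α := by linarith
  simpa using (summable_nat_add_iff 1).2 (Real.summable_one_div_nat_rpow.2 hp)

lemma norm_sin_sq_div_rpow_le (α ξ : ℝ) (k : ℕ) :
    ‖Real.sin (((k : ℝ) + 1) * ξ / 2) ^ 2 / ((k : ℝ) + 1) ^ (1 + α)‖
      ≤ 1 / ((k : ℝ) + 1) ^ (1 + α) := by
  rw [Real.norm_eq_abs, abs_of_nonneg (by positivity)]
  gcongr
  exact Real.sin_sq_le_one _

lemma hasSum_sigma1 {α : ℝ} (hα : 0 < α) (ξ : ℝ) :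
    HasSum (fun k : ℕ => Real.sin (((k : ℝ) + 1) * ξ / 2) ^ 2 / ((k : ℝ) + 1) ^ (1 + α))
      (sigma1 α ξ) :=
  ((summable_one_div_add_one_rpow hα).of_norm_bounded (norm_sin_sq_div_rpow_le α ξ)).hasSum

lemma continuous_sigma1 {α : ℝ} (hα : 0 < α) : Continuous (sigma1 α) :=
  continuous_tsum (fun k => by fun_prop) (summable_one_div_add_one_rpow hα)
    fun k ξ => norm_sin_sq_div_rpow_le α ξ k

lemma sigma1_neg (α ξ : ℝ) : sigma1 α (-ξ) = sigma1 α ξ := by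
  refine tsum_congr fun k => ?_
  rw [mul_neg, neg_div, Real.sin_neg, neg_sq]

/-- Uniform decay `‖K_t‖_∞ ≲ |t|^{-ρ}` of the kernel: the dispersive estimate with rate `ρ`. -/
def HasKernelDecay (α ρ : ℝ) : Prop :=
  ∃ C : ℝ, 0 ≤ C ∧ ∀ t : ℝ, t ≠ 0 → ∀ n : ℤ, ‖Kker α t n‖ ≤ C * |t| ^ (-ρ)

lemma norm_oscInt_le_of_norm_oscInt_le_of_pos {S : ℝ → ℝ} {ρ C b : ℝ}
    (h : ∀ a t : ℝ, 0 < t → ‖oscInt (fun ξ => a * ξ - S ξ * t) 0 b‖ ≤ C * t ^ (-ρ))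
    (a : ℝ) {t : ℝ} (ht : t ≠ 0) :
    ‖oscInt (fun ξ => a * ξ - S ξ * t) 0 b‖ ≤ C * |t| ^ (-ρ) := by
  rcases ht.lt_or_gt with hneg | hpos
  · rw [abs_of_neg hneg, ← norm_oscInt_neg]
    convert h (-a) (-t) (neg_pos.2 hneg) using 3
    ext ξ
    ring
  · rw [abs_of_pos hpos]
    exact h a t hpos

lemma hasKernelDecay_of_norm_oscInt_le {α ρ C : ℝ} (hα : 0 < α) (hC : 0 ≤ C)
    (h : ∀ a t : ℝ, 0 < t →
      ‖oscInt (fun ξ => a * ξ - sigma1 α ξ * t) 0 Real.pi‖ ≤ C * t ^ (-ρ)) :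
    HasKernelDecay α ρ := by
  refine ⟨C, hC, fun t ht n => ?_⟩
  have hσ := continuous_sigma1 hα
  have hhalf := fun a => norm_oscInt_le_of_norm_oscInt_le_of_pos h a ht
  have hreflect : oscInt (fun ξ => (n : ℝ) * ξ - sigma1 α ξ * t) (-Real.pi) 0 =
      oscInt (fun ξ => -(n : ℝ) * ξ - sigma1 α ξ * t) 0 Real.pi := by
    conv_lhs => rw [← neg_zero, ← oscInt_comp_neg]
    simp only [sigma1_neg, mul_neg, neg_mul]
  have hsplit : Kker α t n = (2 * Real.pi)⁻¹ •
      (oscInt (fun ξ => -(n : ℝ) * ξ - sigma1 α ξ * t) 0 Real.pi +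
        oscInt (fun ξ => (n : ℝ) * ξ - sigma1 α ξ * t) 0 Real.pi) := by
    rw [← hreflect, oscInt_add_adjacent (by fun_prop)
      ⟨neg_nonpos.2 Real.pi_pos.le, Real.pi_pos.le⟩]
    rfl
  have hpi : ‖(2 * Real.pi)⁻¹‖ ≤ 1 / 2 := by
    rw [norm_inv, Real.norm_of_nonneg (by positivity), one_div]
    exact inv_anti₀ two_pos (by linarith [Real.pi_gt_three])
  calc ‖Kker α t n‖ ≤ 1 / 2 * (C * |t| ^ (-ρ) + C * |t| ^ (-ρ)) := by
        rw [hsplit, norm_smul]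
        gcongr
        exact (norm_add_le _ _).trans (add_le_add (hhalf _) (hhalf _))
    _ = C * |t| ^ (-ρ) := by ring

end Symbol

/-! ### Kernel decay for `α ≤ 1`: superposition of Fejér kernels -/

section ConcaveSequence

/-- Minus the second difference of a sequence, the weights of a concave sequence `b` with `b 0 = 0`
as a superposition of the truncations `k ↦ min k (m + 1)`. -/
def negSecondDiff (b : ℕ → ℝ) (m : ℕ) : ℝ := 2 * b (m + 1) - b m - b (m + 2)

variable {b : ℕ → ℝ}

lemma sum_negSecondDiff_mul_min (hb : b 0 = 0) (k M : ℕ) :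
    ∑ m ∈ Finset.range M, negSecondDiff b m * (min k (m + 1) : ℕ) =
      b (min k M) - (min k M : ℕ) * (b (M + 1) - b M) := by
  induction M with
  | zero => simp [hb]
  | succ M ih =>
    rw [Finset.sum_range_succ, ih, negSecondDiff]
    rcases le_or_gt k M with h | h
    · rw [min_eq_left h, min_eq_left (by omega : k ≤ M + 1)]
      ring
    · rw [min_eq_right h.le, min_eq_right (by omega : M + 1 ≤ k)]
      push_cast
      ring

lemma hasSum_negSecondDiff_mul_min (hb : b 0 = 0) (hconc : ∀ m, 0 ≤ negSecondDiff b m)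
    (hdiff : Tendsto (fun k => b (k + 1) - b k) atTop (𝓝 0)) (k : ℕ) :
    HasSum (fun m => negSecondDiff b m * (min k (m + 1) : ℕ)) (b k) := by
  rw [hasSum_iff_tendsto_nat_of_nonneg fun m => mul_nonneg (hconc m) (Nat.cast_nonneg _)]
  simp_rw [sum_negSecondDiff_mul_min hb]
  have hlim := (hdiff.const_mul (k : ℝ)).const_sub (b k)
  rw [mul_zero, sub_zero] at hlim
  refine hlim.congr' ?_
  filter_upwards [eventually_ge_atTop k] with M hM
  rw [min_eq_left hM]

end ConcaveSequence

section FejerSymbol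

/-- Closed form on `[0, π]` of the symbol `∑ₖ min(k, m+1) k⁻² sin²(kξ/2)`, whose second derivative
is a negative multiple of a Fejér kernel. -/
def fejerSymbol (m : ℕ) (ξ : ℝ) : ℝ :=
  ((m : ℝ) + 1) * ((2 * Real.pi * ξ - ξ ^ 2) / 8) -
    ∑ k ∈ Finset.range m,
      ((m : ℝ) - k) / ((k : ℝ) + 1) ^ 2 * Real.sin (((k : ℝ) + 1) * ξ / 2) ^ 2

/-- The derivative of `fejerSymbol m`. -/
def fejerSymbolDeriv (m : ℕ) (ξ : ℝ) : ℝ :=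
  ((m : ℝ) + 1) * ((2 * Real.pi - 2 * ξ) / 8) -
    ∑ k ∈ Finset.range m, ((m : ℝ) - k) / ((k : ℝ) + 1) / 2 * Real.sin (((k : ℝ) + 1) * ξ)

/-- The second derivative of `fejerSymbol m`. -/
def fejerSymbolDeriv2 (m : ℕ) (ξ : ℝ) : ℝ :=
  -((m : ℝ) + 1) / 4 - ∑ k ∈ Finset.range m, ((m : ℝ) - k) / 2 * Real.cos (((k : ℝ) + 1) * ξ)

lemma hasDerivAt_sin_sq_half (c ξ : ℝ) :
    HasDerivAt (fun x => Real.sin (c * x / 2) ^ 2) (c / 2 * Real.sin (c * ξ)) ξ := by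
  have hlin : HasDerivAt (fun x : ℝ => c * x / 2) (c / 2) ξ := by
    simpa using ((hasDerivAt_id ξ).const_mul c).div_const 2
  refine (hlin.sin.pow 2).congr_deriv ?_
  rw [show c * ξ = 2 * (c * ξ / 2) by ring, Real.sin_two_mul,
    show 2 * (c * ξ / 2) / 2 = c * ξ / 2 by ring]
  push_cast
  ring

lemma hasDeriv2On_fejerSymbol (m : ℕ) (s : Set ℝ) :
    HasDeriv2On (fejerSymbol m) (fejerSymbolDeriv m) (fejerSymbolDeriv2 m) s := by
  refine ⟨fun ξ _ => ?_, fun ξ _ => ?_, by unfold fejerSymbolDeriv2; fun_prop⟩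
  · have hquad : HasDerivAt (fun ξ : ℝ => (2 * Real.pi * ξ - ξ ^ 2) / 8)
        ((2 * Real.pi - 2 * ξ) / 8) ξ := by
      simpa using (((hasDerivAt_id ξ).const_mul (2 * Real.pi)).sub (hasDerivAt_pow 2 ξ)).div_const 8
    refine (hquad.const_mul _).sub (HasDerivAt.fun_sum fun k _ => ?_)
    refine ((hasDerivAt_sin_sq_half ((k : ℝ) + 1) ξ).const_mul _).congr_deriv ?_
    field_simp
  · have hlin : HasDerivAt (fun ξ : ℝ => ((m : ℝ) + 1) * ((2 * Real.pi - 2 * ξ) / 8))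
        (-((m : ℝ) + 1) / 4) ξ := by
      refine ((((hasDerivAt_id ξ).const_mul 2).const_sub (2 * Real.pi)).div_const 8
        |>.const_mul ((m : ℝ) + 1)).congr_deriv ?_
      ring
    refine hlin.sub (HasDerivAt.fun_sum fun k _ => ?_)
    refine (((hasDerivAt_id ξ).const_mul ((k : ℝ) + 1)).sin.const_mul _).congr_deriv ?_
    simp only [id]
    field_simp

lemma sum_sub_mul_cos_succ (m : ℕ) (ξ : ℝ) :
    ∑ k ∈ Finset.range (m + 1), (((m + 1 : ℕ) : ℝ) - k) * Real.cos (((k : ℝ) + 1) * ξ) =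
      ∑ k ∈ Finset.range m, ((m : ℝ) - k) * Real.cos (((k : ℝ) + 1) * ξ) +
        ∑ k ∈ Finset.range (m + 1), Real.cos (((k : ℝ) + 1) * ξ) := by
  have hext : ∑ k ∈ Finset.range m, ((m : ℝ) - k) * Real.cos (((k : ℝ) + 1) * ξ) =
      ∑ k ∈ Finset.range (m + 1), ((m : ℝ) - k) * Real.cos (((k : ℝ) + 1) * ξ) := by
    simp [Finset.sum_range_succ]
  rw [hext, ← Finset.sum_add_distrib]
  refine Finset.sum_congr rfl fun k _ => ?_
  push_cast
  ring

lemma sum_cos_mul_cos_add_sum_sin_mul_sin (m : ℕ) (ξ : ℝ) :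
    (∑ j ∈ Finset.range (m + 1), Real.cos (j * ξ)) * Real.cos ((m + 1 : ℕ) * ξ) +
      (∑ j ∈ Finset.range (m + 1), Real.sin (j * ξ)) * Real.sin ((m + 1 : ℕ) * ξ) =
    ∑ k ∈ Finset.range (m + 1), Real.cos (((k : ℝ) + 1) * ξ) := by
  rw [Finset.sum_mul, Finset.sum_mul, ← Finset.sum_add_distrib,
    ← Finset.sum_range_reflect (fun k => Real.cos (((k : ℝ) + 1) * ξ))]
  refine Finset.sum_congr rfl fun k hk => ?_
  have hkm : k ≤ m := Nat.lt_succ_iff.1 (Finset.mem_range.1 hk)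
  rw [Nat.add_sub_cancel, Nat.cast_sub hkm, mul_comm (Real.cos _), mul_comm (Real.sin _),
    ← Real.cos_sub]
  congr 1
  push_cast
  ring

-- Both sides are `|∑_{j ≤ m} e^{ijξ}|²`, that is `m + 1` times the Fejér kernel.
lemma fejer_identity (m : ℕ) (ξ : ℝ) :
    ((m : ℝ) + 1) + 2 * ∑ k ∈ Finset.range m, ((m : ℝ) - k) * Real.cos (((k : ℝ) + 1) * ξ) =
      (∑ j ∈ Finset.range (m + 1), Real.cos (j * ξ)) ^ 2 +
      (∑ j ∈ Finset.range (m + 1), Real.sin (j * ξ)) ^ 2 := by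
  induction m with
  | zero => simp
  | succ m ih =>
    have hcross := sum_cos_mul_cos_add_sum_sin_mul_sin m ξ
    have hpyth := Real.sin_sq_add_cos_sq ((m + 1 : ℕ) * ξ)
    rw [Finset.sum_range_succ _ (m + 1), Finset.sum_range_succ _ (m + 1), sum_sub_mul_cos_succ]
    push_cast at hcross hpyth ⊢
    linear_combination ih - 2 * hcross - hpyth

lemma fejerSymbolDeriv2_nonpos (m : ℕ) (ξ : ℝ) : fejerSymbolDeriv2 m ξ ≤ 0 := by
  have heq : fejerSymbolDeriv2 m ξ = -(1 / 4) * (((m : ℝ) + 1) +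
      2 * ∑ k ∈ Finset.range m, ((m : ℝ) - k) * Real.cos (((k : ℝ) + 1) * ξ)) := by
    have hhalf : ∑ k ∈ Finset.range m, ((m : ℝ) - k) / 2 * Real.cos (((k : ℝ) + 1) * ξ) =
        1 / 2 * ∑ k ∈ Finset.range m, ((m : ℝ) - k) * Real.cos (((k : ℝ) + 1) * ξ) := by
      rw [Finset.mul_sum]
      exact Finset.sum_congr rfl fun k _ => by ring
    rw [fejerSymbolDeriv2, hhalf]
    ring
  rw [heq, fejer_identity]
  exact mul_nonpos_of_nonpos_of_nonneg (by norm_num) (by positivity)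

lemma fejerSymbolDeriv2_zero (ξ : ℝ) : fejerSymbolDeriv2 0 ξ = -(1 / 4) := by
  norm_num [fejerSymbolDeriv2]

lemma hasSum_cos_div_sq {ξ : ℝ} (hξ : ξ ∈ Set.Icc 0 (2 * Real.pi)) :
    HasSum (fun n : ℕ => Real.cos (n * ξ) / (n : ℝ) ^ 2)
      (Real.pi ^ 2 / 6 - (2 * Real.pi * ξ - ξ ^ 2) / 4) := by
  have hvalue : (-1) ^ (1 + 1) * (2 * Real.pi) ^ (2 * 1) / 2 / (2 * 1).factorial *
      ((Polynomial.bernoulli (2 * 1)).map (algebraMap ℚ ℝ)).eval (ξ / (2 * Real.pi)) =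
      Real.pi ^ 2 / 6 - (2 * Real.pi * ξ - ξ ^ 2) / 4 := by
    simp only [mul_one, Polynomial.bernoulli_def, Finset.sum_range_succ]
    norm_num [Nat.choose, bernoulli_two, bernoulli_one]
    field_simp
    ring
  refine hvalue ▸ (hasSum_one_div_nat_pow_mul_cos (k := 1) one_ne_zero (x := ξ / (2 * Real.pi))
    ⟨div_nonneg hξ.1 (by positivity), (div_le_one (by positivity)).2 hξ.2⟩).congr_fun fun n => ?_
  rw [mul_right_comm, mul_div_cancel₀ _ (by positivity), mul_one, one_div_mul_eq_div, mul_comm ξ]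

lemma hasSum_sin_sq_half_div_sq {ξ : ℝ} (hξ : ξ ∈ Set.Icc 0 Real.pi) :
    HasSum (fun k : ℕ => Real.sin (((k : ℝ) + 1) * ξ / 2) ^ 2 / ((k : ℝ) + 1) ^ 2)
      ((2 * Real.pi * ξ - ξ ^ 2) / 8) := by
  have hcos := hasSum_cos_div_sq ⟨hξ.1, by linarith [hξ.2, Real.pi_pos]⟩
  have hdiff := (hasSum_nat_add_iff' 1).2 ((hasSum_zeta_two.sub hcos).div_const 2)
  rw [Finset.sum_range_one, Nat.cast_zero, zero_pow two_ne_zero, div_zero, div_zero, sub_zero,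
    zero_div, sub_zero, sub_sub_cancel, div_div] at hdiff
  norm_num only at hdiff
  refine hdiff.congr_fun fun k => ?_
  rw [Real.sin_sq_eq_half_sub, mul_div_cancel₀ _ two_ne_zero]
  push_cast
  ring

lemma hasSum_fejerSymbol (m : ℕ) {ξ : ℝ} (hξ : ξ ∈ Set.Icc 0 Real.pi) :
    HasSum (fun k : ℕ => Real.sin (((k : ℝ) + 1) * ξ / 2) ^ 2 / ((k : ℝ) + 1) ^ 2 *
      (min (k + 1) (m + 1) : ℕ)) (fejerSymbol m ξ) := by
  have hfull := (hasSum_sin_sq_half_div_sq hξ).mul_left ((m : ℝ) + 1)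
  have hhead := hasSum_sum_of_ne_finset_zero (s := Finset.range m) (L := .unconditional ℕ)
    (f := fun k => if k ∈ Finset.range m then
      ((m : ℝ) - k) / ((k : ℝ) + 1) ^ 2 * Real.sin (((k : ℝ) + 1) * ξ / 2) ^ 2 else 0)
    fun k hk => if_neg hk
  rw [Finset.sum_ite_mem, Finset.inter_self] at hhead
  refine (hfull.sub hhead).congr_fun fun k => ?_
  by_cases hk : k ∈ Finset.range m
  · rw [if_pos hk, min_eq_left (by have := Finset.mem_range.1 hk; omega)]
    push_cast
    ring
  · rw [if_neg hk, min_eq_right (by have := Finset.mem_range.not.1 hk; omega)]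
    push_cast
    ring

variable {b : ℕ → ℝ}

lemma hasSum_negSecondDiff_mul_fejerSymbol {ξ S : ℝ} (hξ : ξ ∈ Set.Icc 0 Real.pi) (hb : b 0 = 0)
    (hconc : ∀ m, 0 ≤ negSecondDiff b m)
    (hdiff : Tendsto (fun k => b (k + 1) - b k) atTop (𝓝 0))
    (hS : HasSum (fun k : ℕ =>
      Real.sin (((k : ℝ) + 1) * ξ / 2) ^ 2 / ((k : ℝ) + 1) ^ 2 * b (k + 1)) S) :
    HasSum (fun m => negSecondDiff b m * fejerSymbol m ξ) S := by
  set F : ℕ × ℕ → ℝ := fun x => Real.sin (((x.1 : ℝ) + 1) * ξ / 2) ^ 2 / ((x.1 : ℝ) + 1) ^ 2 *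
    (negSecondDiff b x.2 * (min (x.1 + 1) (x.2 + 1) : ℕ)) with hF
  have hnonneg : 0 ≤ F := fun x =>
    mul_nonneg (by positivity) (mul_nonneg (hconc _) (Nat.cast_nonneg _))
  have hrow : ∀ k, HasSum (fun m => F (k, m))
      (Real.sin (((k : ℝ) + 1) * ξ / 2) ^ 2 / ((k : ℝ) + 1) ^ 2 * b (k + 1)) := fun k =>
    (hasSum_negSecondDiff_mul_min hb hconc hdiff (k + 1)).mul_left _
  have hcol : ∀ m, HasSum (fun k => F (k, m)) (negSecondDiff b m * fejerSymbol m ξ) := fun m =>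
    ((hasSum_fejerSymbol m hξ).mul_left (negSecondDiff b m)).congr_fun fun k => by
      simp only [hF]
      ring
  have hsummable : Summable F := (summable_prod_of_nonneg hnonneg).2
    ⟨fun k => (hrow k).summable, hS.summable.congr fun k => (hrow k).tsum_eq.symm⟩
  have hFS : HasSum F S :=
    (hsummable.hasSum.prod_fiberwise hrow).unique hS ▸ hsummable.hasSum
  exact ((Equiv.prodComm ℕ ℕ).hasSum_iff.2 hFS).prod_fiberwise hcol

lemma HasDeriv2On.sum_const_mul {ι : Type*} {f f' f'' : ι → ℝ → ℝ} {s : Set ℝ} (u : Finset ι)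
    (w : ι → ℝ) (h : ∀ i, HasDeriv2On (f i) (f' i) (f'' i) s) :
    HasDeriv2On (fun x => ∑ i ∈ u, w i * f i x) (fun x => ∑ i ∈ u, w i * f' i x)
      (fun x => ∑ i ∈ u, w i * f'' i x) s :=
  ⟨fun x hx => HasDerivAt.fun_sum fun i _ => ((h i).hasDerivAt x hx).const_mul _,
    fun x hx => HasDerivAt.fun_sum fun i _ => ((h i).hasDerivAt_deriv x hx).const_mul _,
    continuousOn_finsetSum _ fun i _ => continuousOn_const.mul (h i).continuousOn_deriv2⟩

lemma continuous_fejerSymbol (m : ℕ) : Continuous (fejerSymbol m) :=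
  continuousOn_univ.1 (hasDeriv2On_fejerSymbol m Set.univ).continuousOn

lemma sum_mul_fejerSymbolDeriv2_le {w : ℕ → ℝ} (hw : ∀ m, 0 ≤ w m) (N : ℕ) (ξ : ℝ) :
    ∑ m ∈ Finset.range (N + 1), w m * fejerSymbolDeriv2 m ξ ≤ -(w 0 / 4) := by
  rw [Finset.sum_range_succ', fejerSymbolDeriv2_zero]
  have htail : ∑ m ∈ Finset.range N, w (m + 1) * fejerSymbolDeriv2 (m + 1) ξ ≤ 0 :=
    Finset.sum_nonpos fun m _ =>
      mul_nonpos_of_nonneg_of_nonpos (hw _) (fejerSymbolDeriv2_nonpos _ _)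
  linarith

lemma norm_oscInt_le_of_hasSum_fejerSymbol {w : ℕ → ℝ} {S : ℝ → ℝ} (hw : ∀ m, 0 ≤ w m)
    (hw₀ : 0 < w 0)
    (hS : ∀ ξ ∈ Set.Icc 0 Real.pi, HasSum (fun m => w m * fejerSymbol m ξ) (S ξ))
    (a : ℝ) {t : ℝ} (ht : 0 < t) :
    ‖oscInt (fun ξ => a * ξ - S ξ * t) 0 Real.pi‖ ≤ 6 / Real.sqrt (w 0 / 4 * t) := by
  set T : ℕ → ℝ → ℝ := fun N ξ => ∑ m ∈ Finset.range (N + 1), w m * fejerSymbol m ξ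
  have hT : ∀ N, HasDeriv2On (T N) _ _ (Set.Icc 0 Real.pi) := fun N =>
    HasDeriv2On.sum_const_mul (Finset.range (N + 1)) w fun m => hasDeriv2On_fejerSymbol m _
  have hTcont : ∀ N, Continuous (T N) := fun N =>
    continuous_finsetSum _ fun m _ => continuous_const.mul (continuous_fejerSymbol m)
  have hlim := tendsto_oscInt (a := 0) (b := Real.pi) (l := atTop)
    (F := fun N ξ => a * ξ - T N ξ * t) (f := fun ξ => a * ξ - S ξ * t)
    (Eventually.of_forall fun N => by
      have := hTcont N
      exact Continuous.continuousOn (by fun_prop)) fun ξ hξ => by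
      rw [Set.uIcc_of_le Real.pi_pos.le] at hξ
      exact (((hS ξ hξ).tendsto_sum_nat.comp (tendsto_add_atTop_nat 1)).mul_const t).const_sub _
  refine le_of_tendsto hlim.norm (Eventually.of_forall fun N => ?_)
  refine norm_oscInt_le_of_le_deriv2 ((hT N).linear_sub_mul a t) Real.pi_pos.le (by positivity)
    fun ξ _ => ?_
  rw [← neg_mul]
  exact mul_le_mul_of_nonneg_right (le_neg_of_le_neg (sum_mul_fejerSymbolDeriv2_le hw N ξ)) ht.le

end FejerSymbol

section DecayLeOne

variable {α : ℝ}

lemma natCast_mul_rpow_neg (α : ℝ) {k : ℕ} (hk : k ≠ 0) :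
    (k : ℝ) * (k : ℝ) ^ (-α) = (k : ℝ) ^ (1 - α) := by
  rw [sub_eq_add_neg, Real.rpow_add (by positivity), Real.rpow_one]

lemma negSecondDiff_mul_rpow_zero_pos (hα : 0 < α) :
    0 < negSecondDiff (fun k => (k : ℝ) * (k : ℝ) ^ (-α)) 0 := by
  have hpow : (2 : ℝ) ^ (-α) < 1 := Real.rpow_lt_one_of_one_lt_of_neg one_lt_two (neg_lt_zero.2 hα)
  simp only [negSecondDiff, zero_add, Nat.cast_zero, zero_mul, sub_zero, Nat.cast_one,
    Real.one_rpow, mul_one, Nat.cast_ofNat]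
  linarith

lemma negSecondDiff_mul_rpow_nonneg (hα : 0 < α) (hα₁ : α ≤ 1) (m : ℕ) :
    0 ≤ negSecondDiff (fun k => (k : ℝ) * (k : ℝ) ^ (-α)) m := by
  rcases eq_or_ne m 0 with rfl | hm
  · exact (negSecondDiff_mul_rpow_zero_pos hα).le
  · simp only [negSecondDiff, natCast_mul_rpow_neg α hm,
      natCast_mul_rpow_neg α (Nat.succ_ne_zero _)]
    have hmid := (Real.concaveOn_rpow (p := 1 - α) (by linarith) (by linarith)).2
      (show (m : ℝ) ∈ Set.Ici (0 : ℝ) from Set.mem_Ici.2 m.cast_nonneg)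
      (show (m : ℝ) + 2 ∈ Set.Ici (0 : ℝ) from Set.mem_Ici.2 (by positivity))
      one_half_pos.le one_half_pos.le (add_halves 1)
    simp only [smul_eq_mul] at hmid
    rw [show (1 / 2 : ℝ) * m + 1 / 2 * ((m : ℝ) + 2) = (m : ℝ) + 1 by ring] at hmid
    push_cast
    rw [add_assoc (m : ℝ) 1 1, one_add_one_eq_two]
    linarith

lemma tendsto_diff_mul_rpow (hα : 0 < α) (hα₁ : α ≤ 1) :
    Tendsto (fun k : ℕ => ((k + 1 : ℕ) : ℝ) * ((k + 1 : ℕ) : ℝ) ^ (-α) - (k : ℝ) * (k : ℝ) ^ (-α))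
      atTop (𝓝 0) := by
  have hlim : Tendsto (fun k : ℕ => (k : ℝ) ^ (-α)) atTop (𝓝 0) :=
    (tendsto_rpow_neg_atTop hα).comp tendsto_natCast_atTop_atTop
  refine tendsto_of_tendsto_of_tendsto_of_le_of_le' tendsto_const_nhds hlim ?_ ?_ <;>
    filter_upwards [eventually_gt_atTop 0] with k hk
  · rw [natCast_mul_rpow_neg α hk.ne', natCast_mul_rpow_neg α k.succ_ne_zero, sub_nonneg]
    exact Real.rpow_le_rpow k.cast_nonneg (by simp) (by linarith)
  · have hanti : ((k + 1 : ℕ) : ℝ) ^ (-α) ≤ (k : ℝ) ^ (-α) :=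
      Real.rpow_le_rpow_of_nonpos (by exact_mod_cast hk) (by simp) (by linarith)
    have := mul_le_mul_of_nonneg_left hanti (k + 1).cast_nonneg
    push_cast at this ⊢
    linarith

theorem hasKernelDecay_half (hα : 0 < α) (hα₁ : α ≤ 1) : HasKernelDecay α (1 / 2) := by
  set b : ℕ → ℝ := fun k => (k : ℝ) * (k : ℝ) ^ (-α) with hb
  have hw₀ : 0 < negSecondDiff b 0 := negSecondDiff_mul_rpow_zero_pos hα
  have hσ : ∀ ξ ∈ Set.Icc 0 Real.pi,
      HasSum (fun m => negSecondDiff b m * fejerSymbol m ξ) (sigma1 α ξ) := fun ξ hξ => by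
    refine hasSum_negSecondDiff_mul_fejerSymbol hξ (by simp [hb])
      (negSecondDiff_mul_rpow_nonneg hα hα₁) (tendsto_diff_mul_rpow hα hα₁)
      ((hasSum_sigma1 hα ξ).congr_fun fun k => ?_)
    have hk : (0 : ℝ) < (k : ℝ) + 1 := by positivity
    simp only [hb, Nat.cast_add_one]
    rw [Real.rpow_add hk, Real.rpow_one, Real.rpow_neg hk.le]
    field_simp
  refine hasKernelDecay_of_norm_oscInt_le (C := 6 / Real.sqrt (negSecondDiff b 0 / 4)) hα
    (by positivity) fun a t ht => ?_
  refine (norm_oscInt_le_of_hasSum_fejerSymbol (negSecondDiff_mul_rpow_nonneg hα hα₁) hw₀ hσ a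
    ht).trans_eq ?_
  rw [Real.sqrt_mul (by positivity), Real.rpow_neg ht.le, ← Real.sqrt_eq_rpow, div_mul_eq_div_div,
    div_eq_mul_inv]

end DecayLeOne

/-! ### Kernel decay for `α > 1`: the Bose–Einstein integral -/

section AbelCos

/-- The sum `∑ₖ rᵏ cos(kξ)` over `k ≥ 1`, as a function of `c = cos ξ`. -/
def abelCos (r c : ℝ) : ℝ := (r * c - r ^ 2) / (1 - 2 * r * c + r ^ 2)

variable {r c : ℝ}

lemma one_sub_sq_le_abelCos_denom (hr : 0 ≤ r) (hc : c ≤ 1) :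
    (1 - r) ^ 2 ≤ 1 - 2 * r * c + r ^ 2 := by
  linarith [mul_le_mul_of_nonneg_left hc hr]

lemma abelCos_denom_pos (hr : r ∈ Set.Ioo 0 1) (hc : c ≤ 1) : 0 < 1 - 2 * r * c + r ^ 2 :=
  (pow_pos (sub_pos.2 hr.2) 2).trans_le (one_sub_sq_le_abelCos_denom hr.1.le hc)

lemma abelCos_denom_le_four (hr : r ∈ Set.Ioo 0 1) (hc : -1 ≤ c) :
    1 - 2 * r * c + r ^ 2 ≤ 4 := by
  nlinarith [mul_le_mul_of_nonneg_left hc hr.1.le, hr.1, hr.2]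

lemma mul_sub_le_abelCos_sub {c' : ℝ} (hr : r ∈ Set.Ioo 0 1) (hc' : -1 ≤ c') (hcc : c' ≤ c)
    (hc : c ≤ 1) : r * (1 - r ^ 2) / 16 * (c - c') ≤ abelCos r c - abelCos r c' := by
  have hpos := abelCos_denom_pos hr hc
  have hpos' := abelCos_denom_pos hr (hcc.trans hc)
  have hnum : 0 ≤ r * (1 - r ^ 2) * (c - c') :=
    mul_nonneg (mul_nonneg hr.1.le (by nlinarith [hr.1, hr.2])) (sub_nonneg.2 hcc)
  calc r * (1 - r ^ 2) / 16 * (c - c') = r * (1 - r ^ 2) * (c - c') / (4 * 4) := by ring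
    _ ≤ r * (1 - r ^ 2) * (c - c') /
          ((1 - 2 * r * c + r ^ 2) * (1 - 2 * r * c' + r ^ 2)) :=
        div_le_div_of_nonneg_left hnum (mul_pos hpos hpos')
          (mul_le_mul (abelCos_denom_le_four hr (hc'.trans hcc)) (abelCos_denom_le_four hr hc')
            hpos'.le (by norm_num))
    _ = abelCos r c - abelCos r c' := by
        rw [abelCos, abelCos, div_sub_div _ _ hpos.ne' hpos'.ne']
        congr 1
        ring

lemma abelCos_le_of_nonpos (hr : r ∈ Set.Ioo 0 1) (hc : c ∈ Set.Icc (-1) 0) :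
    abelCos r c ≤ -(r ^ 2 / 4) := by
  have hrc : r * c ≤ 0 := mul_nonpos_of_nonneg_of_nonpos hr.1.le hc.2
  rw [abelCos, div_le_iff₀ (abelCos_denom_pos hr (hc.2.trans zero_le_one))]
  nlinarith [mul_le_mul_of_nonneg_left (abelCos_denom_le_four hr hc.1) (sq_nonneg r)]

lemma neg_half_le_abelCos (hr : r ∈ Set.Ioo 0 1) (hc : c ≤ 1) : -(1 / 2) ≤ abelCos r c := by
  rw [abelCos, le_div_iff₀ (abelCos_denom_pos hr hc)]
  nlinarith [hr.1, hr.2]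

lemma mul_sub_div_four_le_abelCos (hr : r ∈ Set.Ioo 0 1) (hrc : r ≤ c) (hc : c ≤ 1) :
    r * (c - r) / 4 ≤ abelCos r c := by
  rw [abelCos, show r * c - r ^ 2 = r * (c - r) by ring]
  exact div_le_div_of_nonneg_left (mul_nonneg hr.1.le (sub_nonneg.2 hrc))
    (abelCos_denom_pos hr hc) (abelCos_denom_le_four hr (by linarith [hr.1]))

lemma abs_abelCos_le (hr : r ∈ Set.Ioo 0 1) (hc : c ∈ Set.Icc (-1) 1) :
    |abelCos r c| ≤ r * 2 / (1 - r) ^ 2 := by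
  have hnum : |r * c - r ^ 2| ≤ r * 2 := by
    rw [pow_two, ← mul_sub, abs_mul, abs_of_pos hr.1]
    exact mul_le_mul_of_nonneg_left
      (abs_le.2 ⟨by linarith [hc.1, hr.2], by linarith [hc.2, hr.1]⟩) hr.1.le
  rw [abelCos, abs_div, abs_of_pos (abelCos_denom_pos hr hc.2)]
  exact div_le_div₀ (by linarith [hr.1]) hnum (pow_pos (sub_pos.2 hr.2) 2)
    (one_sub_sq_le_abelCos_denom hr.1.le hc.2)

-- The real part of the geometric series `z / (1 - z)` at `z = r e^{iξ}`.
lemma hasSum_abelCos (hr : r ∈ Set.Ioo 0 1) (ξ : ℝ) :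
    HasSum (fun k : ℕ => r ^ (k + 1) * Real.cos (((k : ℝ) + 1) * ξ)) (abelCos r (Real.cos ξ)) := by
  set z : ℂ := r * Complex.exp (ξ * Complex.I) with hz
  have hnorm : ‖z‖ < 1 := by
    rw [hz, norm_mul, Complex.norm_exp_ofReal_mul_I, mul_one, Complex.norm_real,
      Real.norm_of_nonneg hr.1.le]
    exact hr.2
  have hre : z.re = r * Real.cos ξ := by
    rw [hz, Complex.re_ofReal_mul, Complex.exp_ofReal_mul_I_re]
  have him : z.im = r * Real.sin ξ := by
    rw [hz, Complex.im_ofReal_mul, Complex.exp_ofReal_mul_I_im]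
  have hpyth := Real.sin_sq_add_cos_sq ξ
  have hnormSq : Complex.normSq (1 - z) = 1 - 2 * r * Real.cos ξ + r ^ 2 := by
    simp only [Complex.normSq_apply, Complex.sub_re, Complex.one_re, Complex.sub_im, Complex.one_im,
      hre, him]
    linear_combination r ^ 2 * hpyth
  have hvalue : (z * (1 - z)⁻¹).re = abelCos r (Real.cos ξ) := by
    simp only [Complex.mul_re, Complex.inv_re, Complex.inv_im, hnormSq, Complex.sub_re,
      Complex.one_re, Complex.sub_im, Complex.one_im, hre, him, abelCos]
    rw [← mul_div_assoc, ← mul_div_assoc, ← sub_div]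
    congr 1
    linear_combination -r ^ 2 * hpyth
  rw [← hvalue]
  refine (Complex.hasSum_re ((hasSum_geometric_of_norm_lt_one hnorm).mul_left z)).congr_fun
    fun k => ?_
  have hpow : z * z ^ k = ((r ^ (k + 1) : ℝ) : ℂ) *
      Complex.exp ((((k : ℝ) + 1) * ξ : ℝ) * Complex.I) := by
    rw [← pow_succ', hz, mul_pow, ← Complex.exp_nat_mul]
    push_cast
    ring_nf
  rw [hpow, Complex.re_ofReal_mul, Complex.exp_ofReal_mul_I_re]

end AbelCos

section BoseIntegral

/-- The Bose–Einstein integral representation of `Γ(a) · Re Li_a(e^{-ε + iξ})`, as a function of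
`c = cos ξ`. -/
def boseIntegral (a ε c : ℝ) : ℝ :=
  ∫ x in Set.Ioi (0 : ℝ), x ^ (a - 1) * abelCos (Real.exp (-(x + ε))) c

variable {a ε c x : ℝ}

lemma exp_neg_add_mem_Ioo (hx : 0 < x) (hε : 0 < ε) : Real.exp (-(x + ε)) ∈ Set.Ioo 0 1 :=
  ⟨Real.exp_pos _, Real.exp_lt_one_iff.2 (by linarith)⟩

lemma integrableOn_boseIntegrand (ha : 0 < a) (hε : 0 < ε) (hc : c ∈ Set.Icc (-1) 1) :
    IntegrableOn (fun x => x ^ (a - 1) * abelCos (Real.exp (-(x + ε))) c) (Set.Ioi 0) := by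
  have hexpε : Real.exp (-ε) < 1 := Real.exp_lt_one_iff.2 (neg_lt_zero.2 hε)
  refine ((Real.GammaIntegral_convergent ha).const_mul (2 / (1 - Real.exp (-ε)) ^ 2)).mono' ?_
    ((ae_restrict_mem measurableSet_Ioi).mono fun x hx => ?_)
  · refine ContinuousOn.aestronglyMeasurable (ContinuousOn.mul
      (fun x hx => (Real.continuousAt_rpow_const _ _ (Or.inl hx.ne')).continuousWithinAt)
      (ContinuousOn.div (by fun_prop) (by fun_prop) fun x hx =>
        (abelCos_denom_pos (exp_neg_add_mem_Ioo hx hε) hc.2).ne')) measurableSet_Ioi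
  · have hx₀ : 0 < x := hx
    have hdecay : Real.exp (-(x + ε)) ≤ Real.exp (-x) := Real.exp_le_exp.2 (by linarith)
    have hbelow : Real.exp (-(x + ε)) ≤ Real.exp (-ε) := Real.exp_le_exp.2 (by linarith)
    rw [norm_mul, Real.norm_of_nonneg (Real.rpow_nonneg hx₀.le _), Real.norm_eq_abs]
    calc x ^ (a - 1) * |abelCos (Real.exp (-(x + ε))) c|
        ≤ x ^ (a - 1) * (Real.exp (-x) * 2 / (1 - Real.exp (-ε)) ^ 2) := by
          refine mul_le_mul_of_nonneg_left
            ((abs_abelCos_le (exp_neg_add_mem_Ioo hx₀ hε) hc).trans ?_) (Real.rpow_nonneg hx₀.le _)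
          have : 0 < 1 - Real.exp (-ε) := sub_pos.2 hexpε
          gcongr
      _ = 2 / (1 - Real.exp (-ε)) ^ 2 * (Real.exp (-x) * x ^ (a - 1)) := by ring

lemma exp_pow_succ (x : ℝ) (k : ℕ) : Real.exp x ^ (k + 1) = Real.exp (((k : ℝ) + 1) * x) := by
  rw [← Real.exp_nat_mul, Nat.cast_add_one]

lemma summable_exp_neg_add_one_mul (hε : 0 < ε) :
    Summable fun k : ℕ => Real.exp (-(((k : ℝ) + 1) * ε)) := by
  refine ((summable_nat_add_iff 1).2 (summable_geometric_of_lt_one (Real.exp_pos (-ε)).le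
    (Real.exp_lt_one_iff.2 (neg_lt_zero.2 hε)))).congr fun k => ?_
  rw [exp_pow_succ, mul_neg]

lemma integral_rpow_mul_exp_neg_add_one_mul (ha : 0 < a) (k : ℕ) :
    ∫ x in Set.Ioi (0 : ℝ), x ^ (a - 1) * Real.exp (-(((k : ℝ) + 1) * x)) =
      Real.Gamma a * ((k : ℝ) + 1) ^ (-a) := by
  rw [Real.integral_rpow_mul_exp_neg_mul_Ioi ha (by positivity), one_div,
    Real.inv_rpow (by positivity), Real.rpow_neg (by positivity), mul_comm]

lemma integrableOn_rpow_mul_exp_neg_add_one_mul (ha : 0 < a) (k : ℕ) :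
    IntegrableOn (fun x => x ^ (a - 1) * Real.exp (-(((k : ℝ) + 1) * x))) (Set.Ioi 0) := by
  simpa only [Real.rpow_one, neg_mul] using integrableOn_rpow_mul_exp_neg_mul_rpow (s := a - 1)
    (p := 1) (b := (k : ℝ) + 1) (by linarith) one_pos (by positivity)

lemma integral_norm_rpow_mul_exp_mul_le (ha : 0 < a) (k : ℕ) {w : ℝ} :
    ∫ x in Set.Ioi (0 : ℝ), ‖x ^ (a - 1) * Real.exp (-(((k : ℝ) + 1) * x)) * w‖ ≤
      Real.Gamma a * |w| := by
  have habs : ∫ x in Set.Ioi (0 : ℝ), ‖x ^ (a - 1) * Real.exp (-(((k : ℝ) + 1) * x)) * w‖ =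
      Real.Gamma a * ((k : ℝ) + 1) ^ (-a) * |w| := by
    rw [← integral_rpow_mul_exp_neg_add_one_mul ha, ← integral_mul_const]
    refine setIntegral_congr_fun measurableSet_Ioi fun x hx => ?_
    have hx₀ : 0 < x := hx
    simp only [norm_mul, Real.norm_eq_abs, Real.abs_exp]
    rw [abs_of_nonneg (Real.rpow_nonneg hx₀.le _)]
  have hGamma := Real.Gamma_pos_of_pos ha
  have hpow : ((k : ℝ) + 1) ^ (-a) ≤ 1 :=
    Real.rpow_le_one_of_one_le_of_nonpos (by linarith [k.cast_nonneg (α := ℝ)]) (by linarith)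
  rw [habs]
  exact mul_le_mul_of_nonneg_right (mul_le_of_le_one_right hGamma.le hpow) (abs_nonneg w)

lemma hasSum_boseIntegral (ha : 0 < a) (hε : 0 < ε) (ξ : ℝ) :
    HasSum (fun k : ℕ => Real.Gamma a * ((k : ℝ) + 1) ^ (-a) *
      (Real.exp (-(((k : ℝ) + 1) * ε)) * Real.cos (((k : ℝ) + 1) * ξ)))
      (boseIntegral a ε (Real.cos ξ)) := by
  set w : ℕ → ℝ := fun k => Real.exp (-(((k : ℝ) + 1) * ε)) * Real.cos (((k : ℝ) + 1) * ξ)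
  have hw : ∀ k, |w k| ≤ Real.exp (-(((k : ℝ) + 1) * ε)) := fun k => by
    rw [abs_mul, Real.abs_exp]
    exact mul_le_of_le_one_right (Real.exp_pos _).le (Real.abs_cos_le_one _)
  have hsum := hasSum_integral_of_summable_integral_norm
    (F := fun (k : ℕ) x => x ^ (a - 1) * Real.exp (-(((k : ℝ) + 1) * x)) * w k)
    (μ := volume.restrict (Set.Ioi 0))
    (fun k => (integrableOn_rpow_mul_exp_neg_add_one_mul ha k).mul_const _)
    (((summable_exp_neg_add_one_mul hε).of_nonneg_of_le (fun k => abs_nonneg _) hw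
      |>.mul_left (Real.Gamma a)).of_nonneg_of_le (fun k => integral_nonneg fun x => norm_nonneg _)
      fun k => integral_norm_rpow_mul_exp_mul_le ha k)
  have hvalue : boseIntegral a ε (Real.cos ξ) = ∫ x in Set.Ioi (0 : ℝ),
      ∑' k : ℕ, x ^ (a - 1) * Real.exp (-(((k : ℝ) + 1) * x)) * w k := by
    refine setIntegral_congr_fun measurableSet_Ioi fun x hx => ?_
    have habel := (hasSum_abelCos (exp_neg_add_mem_Ioo hx hε) ξ).mul_left (x ^ (a - 1))
    refine (habel.congr_fun fun k => ?_).tsum_eq.symm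
    rw [exp_pow_succ, neg_add, mul_add, Real.exp_add, mul_neg, mul_neg]
    ring
  rw [hvalue]
  refine hsum.congr_fun fun k => ?_
  rw [integral_mul_const, integral_rpow_mul_exp_neg_add_one_mul ha]

lemma exists_mul_le_integral_Ioi_rpow_mul (a : ℝ) :
    ∃ W : ℝ, 0 < W ∧ ∀ (x₀ κ : ℝ) (g : ℝ → ℝ), 0 ≤ x₀ → x₀ ≤ 1 →
      IntegrableOn (fun x => x ^ (a - 1) * g x) (Set.Ioi x₀) → (∀ x, x₀ < x → 0 ≤ g x) →
      (∀ x ∈ Set.Ioc (1 : ℝ) 2, κ ≤ g x) → κ * W ≤ ∫ x in Set.Ioi x₀, x ^ (a - 1) * g x := by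
  have hint : IntervalIntegrable (fun x : ℝ => x ^ (a - 1)) volume 1 2 :=
    intervalIntegral.intervalIntegrable_rpow (Or.inr (by simp))
  refine ⟨∫ x in (1 : ℝ)..2, x ^ (a - 1), intervalIntegral.intervalIntegral_pos_of_pos_on hint
    (fun x hx => Real.rpow_pos_of_pos (one_pos.trans hx.1) _) one_lt_two,
    fun x₀ κ g hx₀ hx₁ hg hnonneg hκ => ?_⟩
  have hsub : Set.Ioc (1 : ℝ) 2 ⊆ Set.Ioi x₀ := fun x hx => hx₁.trans_lt hx.1
  calc κ * ∫ x in (1 : ℝ)..2, x ^ (a - 1) = ∫ x in Set.Ioc (1 : ℝ) 2, x ^ (a - 1) * κ := by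
        rw [integral_mul_const, intervalIntegral.integral_of_le one_le_two, mul_comm]
    _ ≤ ∫ x in Set.Ioc (1 : ℝ) 2, x ^ (a - 1) * g x :=
        setIntegral_mono_on (hint.1.mul_const κ) (hg.mono_set hsub) measurableSet_Ioc fun x hx =>
          mul_le_mul_of_nonneg_left (hκ x hx) (Real.rpow_nonneg (zero_le_one.trans hx.1.le) _)
    _ ≤ ∫ x in Set.Ioi x₀, x ^ (a - 1) * g x :=
        setIntegral_mono_set hg ((ae_restrict_mem measurableSet_Ioi).mono fun x hx =>
          mul_nonneg (Real.rpow_nonneg (hx₀.trans hx.le) _) (hnonneg x hx)) hsub.eventuallyLE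

lemma exp_neg_add_mem_Icc (hε : ε ∈ Set.Ioc 0 1) (hx : x ∈ Set.Ioc (1 : ℝ) 2) :
    Real.exp (-(x + ε)) ∈ Set.Icc (Real.exp (-3)) (2 / 5) := by
  refine ⟨Real.exp_le_exp.2 (by linarith [hx.2, hε.2]),
    (Real.exp_le_exp.2 (by linarith [hx.1, hε.1] : -(x + ε) ≤ -1)).trans ?_⟩
  rw [Real.exp_neg, inv_le_comm₀ (Real.exp_pos _) (by norm_num)]
  linarith [Real.exp_one_gt_d9]

lemma exists_mul_sub_le_boseIntegral_sub (ha : 0 < a) :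
    ∃ A : ℝ, 0 < A ∧ ∀ ε ∈ Set.Ioc (0 : ℝ) 1, ∀ c' c : ℝ, -1 ≤ c' → c' ≤ c → c ≤ 1 →
      A * (c - c') ≤ boseIntegral a ε c - boseIntegral a ε c' := by
  obtain ⟨W, hW, hle⟩ := exists_mul_le_integral_Ioi_rpow_mul a
  refine ⟨Real.exp (-3) * (1 / 2) / 16 * W, by positivity, fun ε hε c' c hc' hcc hc => ?_⟩
  have hint := integrableOn_boseIntegrand ha hε.1 ⟨hc'.trans hcc, hc⟩
  have hint' := integrableOn_boseIntegrand ha hε.1 ⟨hc', hcc.trans hc⟩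
  have hcc₀ : 0 ≤ c - c' := sub_nonneg.2 hcc
  have hbound := fun x (hx : 0 < x) =>
    mul_sub_le_abelCos_sub (exp_neg_add_mem_Ioo hx hε.1) hc' hcc hc
  have hdiff := hle 0 (Real.exp (-3) * (1 / 2) / 16 * (c - c'))
    (fun x => abelCos (Real.exp (-(x + ε))) c - abelCos (Real.exp (-(x + ε))) c') le_rfl
    zero_le_one (by simp_rw [mul_sub]; exact hint.sub hint')
    (fun x hx => by
      obtain ⟨hr₀, hr₁⟩ := exp_neg_add_mem_Ioo hx hε.1
      have hsq : Real.exp (-(x + ε)) ^ 2 ≤ 1 := pow_le_one₀ hr₀.le hr₁.le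
      exact (mul_nonneg (div_nonneg (mul_nonneg hr₀.le (sub_nonneg.2 hsq)) (by norm_num))
        hcc₀).trans (hbound x hx))
    (fun x hx => by
      refine le_trans ?_ (hbound x (zero_lt_one.trans hx.1))
      obtain ⟨hlow, hup⟩ := exp_neg_add_mem_Icc hε hx
      have hsq : (1 : ℝ) / 2 ≤ 1 - Real.exp (-(x + ε)) ^ 2 := by
        nlinarith [Real.exp_pos (-(x + ε))]
      gcongr)
  simp_rw [mul_sub (_ ^ _)] at hdiff
  rw [integral_sub hint hint'] at hdiff
  rw [mul_right_comm]
  exact hdiff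

lemma exists_boseIntegral_le_neg (ha : 0 < a) :
    ∃ B : ℝ, 0 < B ∧ ∀ ε ∈ Set.Ioc (0 : ℝ) 1, ∀ c ∈ Set.Icc (-1 : ℝ) 0,
      boseIntegral a ε c ≤ -B := by
  obtain ⟨W, hW, hle⟩ := exists_mul_le_integral_Ioi_rpow_mul a
  refine ⟨Real.exp (-3) ^ 2 / 4 * W, by positivity, fun ε hε c hc => ?_⟩
  have hint := integrableOn_boseIntegrand ha hε.1 ⟨hc.1, hc.2.trans zero_le_one⟩
  have hbound := fun x (hx : 0 < x) =>
    le_neg_of_le_neg (abelCos_le_of_nonpos (exp_neg_add_mem_Ioo hx hε.1) hc)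
  have hneg := hle 0 (Real.exp (-3) ^ 2 / 4) (fun x => -abelCos (Real.exp (-(x + ε))) c) le_rfl
    zero_le_one (by simp_rw [mul_neg]; exact hint.neg)
    (fun x hx => le_trans (by positivity) (hbound x hx))
    (fun x hx => by
      refine le_trans ?_ (hbound x (zero_lt_one.trans hx.1))
      have := (exp_neg_add_mem_Icc hε hx).1
      gcongr)
  simp_rw [mul_neg] at hneg
  rw [integral_neg] at hneg
  exact le_neg_of_le_neg hneg

-- Below `x₀` the integrand is at least `-x^{a-1}/2`; above `x₀` it is nonnegative since then
-- `e^{-(x+ε)} ≤ e^{-x₀} ≤ c`.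
lemma exists_sub_le_boseIntegral (ha : 0 < a) :
    ∃ m : ℝ, 0 < m ∧ ∀ x₀ ∈ Set.Ioc (0 : ℝ) (1 / 2), ∀ ε ∈ Set.Ioc (0 : ℝ) 1, ∀ c : ℝ,
      Real.exp (-x₀) ≤ c → c ≤ 1 → m - x₀ ^ a / (2 * a) ≤ boseIntegral a ε c := by
  obtain ⟨W, hW, hle⟩ := exists_mul_le_integral_Ioi_rpow_mul a
  refine ⟨Real.exp (-3) * (1 / 10) / 4 * W, by positivity, fun x₀ hx₀ ε hε c hc hc₁ => ?_⟩
  have hc_half : 1 / 2 ≤ c := by linarith [Real.add_one_le_exp (-x₀), hx₀.2]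
  have hint := integrableOn_boseIntegrand ha hε.1 ⟨by linarith, hc₁⟩
  have hpow := intervalIntegral.intervalIntegrable_rpow' (a := 0) (b := x₀) (r := a - 1)
    (by linarith)
  have hbelow : -(x₀ ^ a / (2 * a)) ≤
      ∫ x in Set.Ioc 0 x₀, x ^ (a - 1) * abelCos (Real.exp (-(x + ε))) c := by
    calc -(x₀ ^ a / (2 * a)) = ∫ x in Set.Ioc 0 x₀, x ^ (a - 1) * -(1 / 2) := by
          rw [integral_mul_const, ← intervalIntegral.integral_of_le hx₀.1.le,
            integral_rpow (Or.inl (by linarith)), sub_add_cancel, Real.zero_rpow ha.ne']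
          ring
      _ ≤ _ := setIntegral_mono_on (hpow.1.mul_const _) (hint.mono_set Set.Ioc_subset_Ioi_self)
          measurableSet_Ioc fun x hx => mul_le_mul_of_nonneg_left
            (neg_half_le_abelCos (exp_neg_add_mem_Ioo hx.1 hε.1) hc₁) (Real.rpow_nonneg hx.1.le _)
  have hbound : ∀ x, x₀ < x → Real.exp (-(x + ε)) ≤ c ∧
      Real.exp (-(x + ε)) * (c - Real.exp (-(x + ε))) / 4 ≤ abelCos (Real.exp (-(x + ε))) c :=
    fun x hx => by
      have hrc := (Real.exp_le_exp.2 (by linarith [hε.1] : -(x + ε) ≤ -x₀)).trans hc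
      exact ⟨hrc, mul_sub_div_four_le_abelCos (exp_neg_add_mem_Ioo (hx₀.1.trans hx) hε.1) hrc hc₁⟩
  have habove := hle x₀ (Real.exp (-3) * (1 / 10) / 4)
    (fun x => abelCos (Real.exp (-(x + ε))) c) hx₀.1.le (by linarith [hx₀.2])
    (hint.mono_set (Set.Ioi_subset_Ioi hx₀.1.le))
    (fun x hx => le_trans (div_nonneg (mul_nonneg (Real.exp_pos _).le
      (sub_nonneg.2 (hbound x hx).1)) (by norm_num)) (hbound x hx).2)
    (fun x hx => by
      refine le_trans ?_ (hbound x (by linarith [hx.1, hx₀.2])).2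
      obtain ⟨hlow, hup⟩ := exp_neg_add_mem_Icc hε hx
      have : 1 / 10 ≤ c - Real.exp (-(x + ε)) := by linarith
      gcongr)
  rw [boseIntegral, ← Set.Ioc_union_Ioi_eq_Ioi hx₀.1.le, setIntegral_union
    (Set.Ioc_disjoint_Ioi le_rfl) measurableSet_Ioi (hint.mono_set Set.Ioc_subset_Ioi_self)
    (hint.mono_set (Set.Ioi_subset_Ioi hx₀.1.le))]
  linarith

lemma exists_le_boseIntegral (ha : 0 < a) :
    ∃ D c₁ : ℝ, 0 < D ∧ c₁ ∈ Set.Ioo (0 : ℝ) 1 ∧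
      ∀ ε ∈ Set.Ioc (0 : ℝ) 1, ∀ c ∈ Set.Icc c₁ 1, D ≤ boseIntegral a ε c := by
  obtain ⟨m, hm, hle⟩ := exists_sub_le_boseIntegral ha
  have hcont : ContinuousAt (fun x : ℝ => x ^ a / (2 * a)) 0 :=
    (Real.continuousAt_rpow_const _ _ (Or.inr ha.le)).div_const _
  have hsmall : ∀ᶠ x in 𝓝[>] (0 : ℝ), x ^ a / (2 * a) ≤ m / 2 :=
    nhdsWithin_le_nhds (hcont.eventually_le_const (by
      simpa [Real.zero_rpow ha.ne'] using hm))
  obtain ⟨x₀, hx₀m, hx₀⟩ :=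
    (hsmall.and (Ioc_mem_nhdsGT (show (0 : ℝ) < 1 / 2 by norm_num))).exists
  refine ⟨m / 2, Real.exp (-x₀), half_pos hm,
    ⟨Real.exp_pos _, Real.exp_lt_one_iff.2 (neg_lt_zero.2 hx₀.1)⟩, fun ε hε c hc => ?_⟩
  linarith [hle x₀ hx₀ ε hε c hc.1 hc.2]

end BoseIntegral

/-! ### Kernel decay for `α > 1`: Airy-type phases -/

section AiryProfile

/-- The quantitative shape of a symbol's second derivative `g` on `[0, π]`: it is at least `m` on
`[0, δ]`, decreases at rate at least `m` on `[δ, π/2]`, and is at most `-m` on `[π/2, π]`. Hence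
`g` vanishes only to first order, as for the Airy phase. -/
structure IsAiryProfile (g : ℝ → ℝ) (δ m : ℝ) : Prop where
  mem_Icc : δ ∈ Set.Icc 0 (Real.pi / 2)
  pos : 0 < m
  le : ∀ ξ ∈ Set.Icc 0 δ, m ≤ g ξ
  mul_sub_le : ∀ x y, δ ≤ x → x ≤ y → y ≤ Real.pi / 2 → m * (y - x) ≤ g x - g y
  le_neg : ∀ ξ ∈ Set.Icc (Real.pi / 2) Real.pi, g ξ ≤ -m

variable {g : ℝ → ℝ} {δ m : ℝ}

lemma IsAiryProfile.const_mul (h : IsAiryProfile g δ m) {c : ℝ} (hc : 0 < c) :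
    IsAiryProfile (fun ξ => c * g ξ) δ (c * m) where
  mem_Icc := h.mem_Icc
  pos := mul_pos hc h.pos
  le ξ hξ := mul_le_mul_of_nonneg_left (h.le ξ hξ) hc.le
  mul_sub_le x y hx hxy hy := by
    rw [mul_assoc, ← mul_sub]
    exact mul_le_mul_of_nonneg_left (h.mul_sub_le x y hx hxy hy) hc.le
  le_neg ξ hξ := by
    rw [← mul_neg]
    exact mul_le_mul_of_nonneg_left (h.le_neg ξ hξ) hc.le

lemma IsAiryProfile.norm_oscInt_le_add {S S' S'' : ℝ → ℝ} (h : IsAiryProfile S'' δ m)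
    (hS : HasDeriv2On S S' S'' (Set.Icc 0 Real.pi)) (a : ℝ) {t d : ℝ} (ht : 0 < t) (hd : 0 < d) :
    ‖oscInt (fun ξ => a * ξ - S ξ * t) 0 Real.pi‖ ≤
      6 / Real.sqrt (m * t) + (2 * (6 / Real.sqrt (m * t * d)) + 2 * d) +
        6 / Real.sqrt (m * t) := by
  have hpi := Real.pi_pos
  have hf := hS.linear_sub_mul a t
  have hmt : 0 < m * t := mul_pos h.pos ht
  have hδ := h.mem_Icc
  have hleft := norm_oscInt_le_of_deriv2_le_neg
    (hf.mono (Set.Icc_subset_Icc_right (by linarith [hδ.2]))) hδ.1 hmt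
    fun ξ hξ => neg_le_neg (mul_le_mul_of_nonneg_right (h.le ξ hξ) ht.le)
  have hmid := norm_oscInt_le_of_mul_sub_le_deriv2_sub
    (hf.mono (Set.Icc_subset_Icc hδ.1 (by linarith))) hδ.2 hmt hd fun x y hx hxy hy => by
      linarith [mul_le_mul_of_nonneg_right (h.mul_sub_le x y hx hxy hy) ht.le]
  have hright := norm_oscInt_le_of_le_deriv2
    (hf.mono (Set.Icc_subset_Icc_left (half_pos hpi).le)) (half_le_self hpi.le) hmt fun ξ hξ => by
      linarith [mul_le_mul_of_nonneg_right (h.le_neg ξ hξ) ht.le]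
  rw [← oscInt_add_adjacent (c := Real.pi / 2) hf.continuousOn ⟨by linarith, by linarith⟩,
    ← oscInt_add_adjacent (c := δ)
      (hf.continuousOn.mono (Set.Icc_subset_Icc_right (by linarith))) hδ]
  exact norm_add₃_le.trans (add_le_add (add_le_add hleft hmid) hright)

-- The width `d = t^{-1/3}` around the zero of `S''` balances the two terms of the middle bound.
lemma IsAiryProfile.norm_oscInt_le {S S' S'' : ℝ → ℝ} (h : IsAiryProfile S'' δ m)
    (hS : HasDeriv2On S S' S'' (Set.Icc 0 Real.pi)) (a : ℝ) {t : ℝ} (ht : 1 ≤ t) :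
    ‖oscInt (fun ξ => a * ξ - S ξ * t) 0 Real.pi‖ ≤
      (24 / Real.sqrt m + 2) * t ^ (-(1 / 3 : ℝ)) := by
  have ht₀ : 0 < t := one_pos.trans_le ht
  set d := t ^ (-(1 / 3 : ℝ)) with hd
  have hd₀ : 0 < d := Real.rpow_pos_of_pos ht₀ _
  have hsqrt : Real.sqrt (m * t * d) = Real.sqrt m * d⁻¹ := by
    have htd : t * d = d⁻¹ ^ 2 := by
      rw [hd, ← Real.rpow_one_add' ht₀.le (by norm_num), ← Real.rpow_neg ht₀.le,
        ← Real.rpow_mul_natCast ht₀.le]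
      norm_num
    rw [mul_assoc, htd, Real.sqrt_mul h.pos.le, Real.sqrt_sq (inv_nonneg.2 hd₀.le)]
  have houter : 6 / Real.sqrt (m * t) ≤ 6 / Real.sqrt m * d := by
    rw [Real.sqrt_mul h.pos.le, div_mul_eq_div_div, div_eq_mul_inv _ (Real.sqrt t)]
    refine mul_le_mul_of_nonneg_left ?_ (by positivity)
    rw [Real.sqrt_eq_rpow, ← Real.rpow_neg ht₀.le]
    exact Real.rpow_le_rpow_of_exponent_le ht (by norm_num)
  calc _ ≤ _ := h.norm_oscInt_le_add hS a ht₀ hd₀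
    _ ≤ 6 / Real.sqrt m * d + (2 * (6 / Real.sqrt (m * t * d)) + 2 * d) + 6 / Real.sqrt m * d :=
        add_le_add (add_le_add_left houter _) houter
    _ = (24 / Real.sqrt m + 2) * d := by
        rw [hsqrt, ← div_div, div_inv_eq_mul]
        ring

lemma sin_mul_sub_le_cos_sub {x y : ℝ} (hδ : 0 ≤ δ) (hx : δ ≤ x) (hxy : x ≤ y)
    (hy : y ≤ Real.pi / 2) : Real.sin δ * (y - x) ≤ Real.cos x - Real.cos y := by
  have hmvt := (convex_Icc δ (Real.pi / 2)).mul_sub_le_image_sub_of_le_deriv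
    (f := fun x => -Real.cos x) (C := Real.sin δ) (by fun_prop) (by fun_prop)
    (fun z hz => by
      have hz' := interior_subset hz
      rw [deriv.fun_neg, Real.deriv_cos, neg_neg]
      exact Real.sin_le_sin_of_le_of_le_pi_div_two (by linarith [Real.pi_pos]) hz'.2 hz'.1)
    x ⟨hx, hxy.trans hy⟩ y ⟨hx.trans hxy, hy⟩ hxy
  simpa only [neg_sub_neg] using hmvt

lemma exists_isAiryProfile_boseIntegral_cos {a : ℝ} (ha : 0 < a) :
    ∃ δ m : ℝ, ∀ ε ∈ Set.Ioc (0 : ℝ) 1,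
      IsAiryProfile (fun ξ => boseIntegral a ε (Real.cos ξ)) δ m := by
  obtain ⟨A, hA, hAle⟩ := exists_mul_sub_le_boseIntegral_sub ha
  obtain ⟨B, hB, hBle⟩ := exists_boseIntegral_le_neg ha
  obtain ⟨D, c₁, hD, hc₁, hDle⟩ := exists_le_boseIntegral ha
  have hδ₀ : 0 < Real.arccos c₁ := Real.arccos_pos.2 hc₁.2
  have hδ₁ : Real.arccos c₁ < Real.pi / 2 := Real.arccos_lt_pi_div_two.2 hc₁.1
  have hcos : Real.cos (Real.arccos c₁) = c₁ := Real.cos_arccos (by linarith [hc₁.1]) hc₁.2.le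
  have hsin : 0 < Real.sin (Real.arccos c₁) :=
    Real.sin_pos_of_pos_of_lt_pi hδ₀ (by linarith [Real.pi_pos])
  refine ⟨Real.arccos c₁, min D (min (A * Real.sin (Real.arccos c₁)) B), fun ε hε =>
    ⟨⟨hδ₀.le, hδ₁.le⟩, by positivity, fun ξ hξ => ?_, fun x y hx hxy hy => ?_, fun ξ hξ => ?_⟩⟩
  · refine (min_le_left _ _).trans (hDle ε hε _ ⟨?_, Real.cos_le_one ξ⟩)
    rw [← hcos]
    exact Real.cos_le_cos_of_nonneg_of_le_pi hξ.1 (by linarith) hξ.2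
  · have hmono := hAle ε hε (Real.cos y) (Real.cos x) (Real.neg_one_le_cos y)
      (Real.cos_le_cos_of_nonneg_of_le_pi (hδ₀.le.trans hx) (by linarith) hxy) (Real.cos_le_one x)
    calc _ ≤ A * Real.sin (Real.arccos c₁) * (y - x) :=
          mul_le_mul_of_nonneg_right ((min_le_right _ _).trans (min_le_left _ _))
            (sub_nonneg.2 hxy)
      _ = A * (Real.sin (Real.arccos c₁) * (y - x)) := mul_assoc _ _ _
      _ ≤ A * (Real.cos x - Real.cos y) :=
          mul_le_mul_of_nonneg_left (sin_mul_sub_le_cos_sub hδ₀.le hx hxy hy) hA.le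
      _ ≤ _ := hmono
  · exact (hBle ε hε _ ⟨Real.neg_one_le_cos ξ, Real.cos_nonpos_of_pi_div_two_le_of_le hξ.1
      (by linarith [hξ.2])⟩).trans (neg_le_neg ((min_le_right _ _).trans (min_le_right _ _)))

end AiryProfile

section SymbolSeries

/-- The symbol `∑ₖ wₖ sin²(kξ/2)` over `k ≥ 1` of the lattice operator with coupling `w`; the
weight of `k` is stored as `w (k - 1)`. -/
def symbolSeries (w : ℕ → ℝ) (ξ : ℝ) : ℝ :=
  ∑' k : ℕ, Real.sin (((k : ℝ) + 1) * ξ / 2) ^ 2 * w k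

/-- The termwise derivative of `symbolSeries w`. -/
def symbolSeriesDeriv (w : ℕ → ℝ) (ξ : ℝ) : ℝ :=
  ∑' k : ℕ, ((k : ℝ) + 1) / 2 * Real.sin (((k : ℝ) + 1) * ξ) * w k

/-- The termwise second derivative of `symbolSeries w`. -/
def symbolSeriesDeriv2 (w : ℕ → ℝ) (ξ : ℝ) : ℝ :=
  ∑' k : ℕ, ((k : ℝ) + 1) ^ 2 / 2 * Real.cos (((k : ℝ) + 1) * ξ) * w k

variable {w : ℕ → ℝ} {α ε : ℝ}

lemma hasDeriv2On_symbolSeries (hw : Summable fun k : ℕ => ((k : ℝ) + 1) ^ 2 * |w k|)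
    (s : Set ℝ) :
    HasDeriv2On (symbolSeries w) (symbolSeriesDeriv w) (symbolSeriesDeriv2 w) s := by
  have hone : ∀ k : ℕ, (1 : ℝ) ≤ (k : ℝ) + 1 := fun k => by linarith [k.cast_nonneg (α := ℝ)]
  have hbound₁ : ∀ (k : ℕ) (ξ : ℝ), ‖((k : ℝ) + 1) / 2 * Real.sin (((k : ℝ) + 1) * ξ) * w k‖ ≤
      ((k : ℝ) + 1) ^ 2 * |w k| := fun k ξ => by
    rw [norm_mul, norm_mul, Real.norm_of_nonneg (by positivity), Real.norm_eq_abs, Real.norm_eq_abs]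
    refine mul_le_mul_of_nonneg_right ?_ (abs_nonneg _)
    nlinarith [Real.abs_sin_le_one (((k : ℝ) + 1) * ξ), hone k]
  have hbound₂ : ∀ (k : ℕ) (ξ : ℝ),
      ‖((k : ℝ) + 1) ^ 2 / 2 * Real.cos (((k : ℝ) + 1) * ξ) * w k‖ ≤
      ((k : ℝ) + 1) ^ 2 * |w k| := fun k ξ => by
    rw [norm_mul, norm_mul, Real.norm_of_nonneg (by positivity), Real.norm_eq_abs, Real.norm_eq_abs]
    refine mul_le_mul_of_nonneg_right ?_ (abs_nonneg _)
    nlinarith [Real.abs_cos_le_one (((k : ℝ) + 1) * ξ), hone k]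
  have hlin : ∀ c x : ℝ, HasDerivAt (fun x => c * x) c x := fun c x => by
    simpa using (hasDerivAt_id x).const_mul c
  refine ⟨fun ξ _ => hasDerivAt_tsum hw (y₀ := 0)
      (fun k x => (hasDerivAt_sin_sq_half ((k : ℝ) + 1) x).mul_const _) hbound₁ (by simp) ξ,
    fun ξ _ => hasDerivAt_tsum hw (y₀ := 0) (fun k x => ?_) hbound₂ (by simp) ξ,
    (continuous_tsum (fun k => by fun_prop) hw hbound₂).continuousOn⟩
  exact (((hlin ((k : ℝ) + 1) x).sin.const_mul (((k : ℝ) + 1) / 2)).congr_deriv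
    (by ring)).mul_const _

/-- The power weights `k^{-(1+α)}`, `k ≥ 1`, damped by `e^{-εk}`. -/
def abelWeight (α ε : ℝ) (k : ℕ) : ℝ :=
  ((k : ℝ) + 1) ^ (-(1 + α)) * Real.exp (-(((k : ℝ) + 1) * ε))

lemma sq_mul_abelWeight (α ε : ℝ) (k : ℕ) :
    ((k : ℝ) + 1) ^ 2 * abelWeight α ε k =
      ((k : ℝ) + 1) ^ (-(α - 1)) * Real.exp (-(((k : ℝ) + 1) * ε)) := by
  rw [abelWeight, ← mul_assoc, ← Real.rpow_natCast, ← Real.rpow_add (by positivity)]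
  ring_nf

lemma summable_sq_mul_abs_abelWeight (hα : 1 ≤ α) (hε : 0 < ε) :
    Summable fun k : ℕ => ((k : ℝ) + 1) ^ 2 * |abelWeight α ε k| := by
  refine (summable_exp_neg_add_one_mul hε).of_nonneg_of_le (fun k => by positivity) fun k => ?_
  rw [abs_of_nonneg (by unfold abelWeight; positivity), sq_mul_abelWeight]
  exact mul_le_of_le_one_left (Real.exp_pos _).le (Real.rpow_le_one_of_one_le_of_nonpos
    (by linarith [k.cast_nonneg (α := ℝ)]) (by linarith))

lemma symbolSeriesDeriv2_abelWeight (hα : 1 < α) (hε : 0 < ε) (ξ : ℝ) :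
    symbolSeriesDeriv2 (abelWeight α ε) ξ =
      (2 * Real.Gamma (α - 1))⁻¹ * boseIntegral (α - 1) ε (Real.cos ξ) := by
  have hΓ := Real.Gamma_pos_of_pos (sub_pos.2 hα)
  refine (((hasSum_boseIntegral (sub_pos.2 hα) hε ξ).mul_left
    (2 * Real.Gamma (α - 1))⁻¹).congr_fun fun k => ?_).tsum_eq
  calc ((k : ℝ) + 1) ^ 2 / 2 * Real.cos (((k : ℝ) + 1) * ξ) * abelWeight α ε k
      = ((k : ℝ) + 1) ^ 2 * abelWeight α ε k * Real.cos (((k : ℝ) + 1) * ξ) / 2 := by ring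
    _ = _ := by
        rw [sq_mul_abelWeight]
        field_simp

lemma tendsto_symbolSeries_abelWeight (hα : 0 < α) (ξ : ℝ) :
    Tendsto (fun ε => symbolSeries (abelWeight α ε) ξ) (𝓝[>] 0) (𝓝 (sigma1 α ξ)) := by
  have hterm : ∀ (k : ℕ) (ε : ℝ), Real.sin (((k : ℝ) + 1) * ξ / 2) ^ 2 * abelWeight α ε k =
      Real.sin (((k : ℝ) + 1) * ξ / 2) ^ 2 / ((k : ℝ) + 1) ^ (1 + α) *
        Real.exp (-(((k : ℝ) + 1) * ε)) := fun k ε => by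
    rw [abelWeight, Real.rpow_neg (by positivity), ← mul_assoc, ← div_eq_mul_inv]
  simp only [symbolSeries, hterm]
  refine tendsto_tsum_of_dominated_convergence (summable_one_div_add_one_rpow hα) (fun k => ?_) ?_
  · have hcont : Continuous fun ε => Real.sin (((k : ℝ) + 1) * ξ / 2) ^ 2 /
        ((k : ℝ) + 1) ^ (1 + α) * Real.exp (-(((k : ℝ) + 1) * ε)) := by fun_prop
    exact (by simpa using hcont.tendsto 0 : Tendsto _ (𝓝 (0 : ℝ)) _).mono_left nhdsWithin_le_nhds
  · filter_upwards [self_mem_nhdsWithin] with ε hε k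
    have hexp : Real.exp (-(((k : ℝ) + 1) * ε)) ≤ 1 :=
      Real.exp_le_one_iff.2 (neg_nonpos.2 (mul_nonneg (by positivity) (Set.mem_Ioi.1 hε).le))
    rw [norm_mul, Real.norm_of_nonneg (Real.exp_pos _).le]
    exact (mul_le_of_le_one_right (norm_nonneg _) hexp).trans (norm_sin_sq_div_rpow_le α ξ k)

theorem hasKernelDecay_third (hα : 1 < α) : HasKernelDecay α (1 / 3) := by
  obtain ⟨δ, m, hprofile⟩ := exists_isAiryProfile_boseIntegral_cos (sub_pos.2 hα)
  have hκ : 0 < (2 * Real.Gamma (α - 1))⁻¹ := by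
    have := Real.Gamma_pos_of_pos (sub_pos.2 hα)
    positivity
  set M := 24 / Real.sqrt ((2 * Real.Gamma (α - 1))⁻¹ * m) + 2
  have hM : 0 < M := by positivity
  refine hasKernelDecay_of_norm_oscInt_le (zero_lt_one.trans hα) (add_pos Real.pi_pos hM).le
    fun a t ht => ?_
  rw [add_mul]
  rcases le_total t 1 with ht₁ | ht₁
  · have htriv := norm_oscInt_le_abs_sub (fun ξ => a * ξ - sigma1 α ξ * t) 0 Real.pi
    rw [sub_zero, abs_of_pos Real.pi_pos] at htriv
    have hpow : 1 ≤ t ^ (-(1 / 3) : ℝ) :=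
      Real.one_le_rpow_of_pos_of_le_one_of_nonpos ht ht₁ (by norm_num)
    exact htriv.trans ((le_mul_of_one_le_right Real.pi_pos.le hpow).trans
      (le_add_of_nonneg_right (by positivity)))
  refine le_trans ?_ (le_add_of_nonneg_left (mul_nonneg Real.pi_pos.le (Real.rpow_nonneg ht.le _)))
  have hreg : ∀ᶠ ε in 𝓝[>] (0 : ℝ),
      ‖oscInt (fun ξ => a * ξ - symbolSeries (abelWeight α ε) ξ * t) 0 Real.pi‖ ≤
        M * t ^ (-(1 / 3) : ℝ) := by
    filter_upwards [Ioc_mem_nhdsGT one_pos] with ε hε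
    have hairy : IsAiryProfile (symbolSeriesDeriv2 (abelWeight α ε)) δ _ :=
      (funext (symbolSeriesDeriv2_abelWeight hα hε.1)) ▸ (hprofile ε hε).const_mul hκ
    exact hairy.norm_oscInt_le
      (hasDeriv2On_symbolSeries (summable_sq_mul_abs_abelWeight hα.le hε.1) _) a ht₁
  refine le_of_tendsto (tendsto_oscInt (Filter.eventually_of_mem self_mem_nhdsWithin
    fun ε hε => ?_) fun ξ _ => ?_).norm hreg
  · exact ((hasDeriv2On_symbolSeries (summable_sq_mul_abs_abelWeight hα.le hε) _).linear_sub_mul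
      a t).continuousOn
  · exact ((tendsto_symbolSeries_abelWeight (zero_lt_one.trans hα) ξ).mul_const t).const_sub _

end SymbolSeries

/-! ### The discrete Hardy–Littlewood–Sobolev inequality -/

section HardyLittlewoodSobolev

/-- The fractional kernel `N^(-2/(r+2))`. The exponent is parametrized so that the
Hardy–Littlewood–Sobolev inequality maps `ℓ^((r+2)/(r+1))` to its dual `ℓ^(r+2)`, which keeps all
Lebesgue exponents natural numbers. -/
def fracKernel (r N : ℕ) : ℝ := (N : ℝ) ^ (-(2 / ((r : ℝ) + 2)))

/-- The distance `1 + |i - j|`, comparable with `max 1 |t - s|` for `t ∈ [i, i+1]` and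
`s ∈ [j, j+1]`. -/
def boxDist (i j : ℕ) : ℕ := 1 + Nat.dist i j

variable {r n : ℕ} {f : ℕ → ℝ} {s : ℝ}

lemma fracKernel_nonneg (r N : ℕ) : 0 ≤ fracKernel r N := Real.rpow_nonneg (Nat.cast_nonneg _) _

lemma fracKernel_pow (r N : ℕ) : fracKernel r N ^ (r + 2) = ((N : ℝ) ^ 2)⁻¹ := by
  have hexp : -(2 / ((r : ℝ) + 2)) * ((r + 2 : ℕ) : ℝ) = -(2 : ℕ) := by
    push_cast; field_simp
  rw [fracKernel, ← Real.rpow_natCast, ← Real.rpow_mul (Nat.cast_nonneg _), hexp,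
    Real.rpow_neg (Nat.cast_nonneg _), Real.rpow_natCast]

lemma boxDist_comm (i j : ℕ) : boxDist i j = boxDist j i := by rw [boxDist, boxDist, Nat.dist_comm]

lemma mul_sum_rpow_neg_le {ρ : ℝ} (hρ₀ : 0 ≤ ρ) (hρ₁ : ρ < 1) (M : ℕ) :
    (1 - ρ) * ∑ N ∈ Finset.Icc 1 M, (N : ℝ) ^ (-ρ) ≤ (M : ℝ) ^ (1 - ρ) := by
  induction M with
  | zero => simpa using Real.rpow_nonneg le_rfl (1 - ρ)
  | succ M ih =>
    have hM : (0 : ℝ) < (M : ℝ) + 1 := by positivity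
    have hinv : -1 ≤ -(1 / ((M : ℝ) + 1)) := by
      rw [neg_le_neg_iff, div_le_one hM]; linarith [Nat.cast_nonneg (α := ℝ) M]
    have hbernoulli := rpow_one_add_le_one_add_mul_self hinv (sub_nonneg.2 hρ₁.le) (by linarith)
    have hbase : 1 + -(1 / ((M : ℝ) + 1)) = M / (M + 1) := by field_simp; ring
    rw [hbase, Real.div_rpow M.cast_nonneg hM.le, div_le_iff₀ (by positivity)] at hbernoulli
    have hlast : ((M : ℝ) + 1) ^ (-ρ) = ((M : ℝ) + 1) ^ (1 - ρ) / (M + 1) := by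
      rw [← Real.rpow_sub_one hM.ne']; congr 1; ring
    have hstep : (1 + (1 - ρ) * -(1 / ((M : ℝ) + 1))) * ((M : ℝ) + 1) ^ (1 - ρ) =
        ((M : ℝ) + 1) ^ (1 - ρ) - (1 - ρ) * ((M : ℝ) + 1) ^ (-ρ) := by rw [hlast]; ring
    rw [Finset.sum_Icc_succ_top (by lia), mul_add]
    push_cast
    linarith

lemma sum_fracKernel_le (hr : 0 < r) (M : ℕ) :
    ∑ N ∈ Finset.Icc 1 M, fracKernel r N ≤ 3 * (M : ℝ) ^ ((r : ℝ) / (r + 2)) := by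
  have hr' : (1 : ℝ) ≤ r := by exact_mod_cast hr
  have hexp : 1 - 2 / ((r : ℝ) + 2) = r / (r + 2) := by field_simp; ring
  have hthird : 1 / 3 ≤ (r : ℝ) / (r + 2) := by
    rw [div_le_div_iff₀ (by norm_num) (by positivity)]; linarith
  have hsum := mul_sum_rpow_neg_le (ρ := 2 / ((r : ℝ) + 2)) (by positivity)
    ((div_lt_one (by positivity)).2 (by linarith)) M
  rw [hexp] at hsum
  have hmono := mul_le_mul_of_nonneg_right hthird
    (Finset.sum_nonneg fun N (_ : N ∈ Finset.Icc 1 M) => fracKernel_nonneg r N)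
  simp only [fracKernel] at hmono ⊢
  linarith

lemma sum_comp_boxDist_le {G : ℕ → ℝ} (hG : ∀ N, 0 ≤ G N) (i : ℕ) {S T : Finset ℕ}
    (hST : ∀ j ∈ S, boxDist i j ∈ T) :
    ∑ j ∈ S, G (boxDist i j) ≤ 2 * ∑ N ∈ T, G N := by
  rw [← Finset.sum_fiberwise_of_maps_to hST, Finset.mul_sum]
  refine Finset.sum_le_sum fun N _ => ?_
  have hfiber : S.filter (boxDist i · = N) ⊆ {i + (N - 1), i - (N - 1)} := fun j hj => by
    have hjN := (Finset.mem_filter.1 hj).2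
    simp only [boxDist, Nat.dist, Finset.mem_insert, Finset.mem_singleton] at hjN ⊢
    lia
  calc ∑ j ∈ S with boxDist i j = N, G (boxDist i j)
      = ((S.filter (boxDist i · = N)).card : ℝ) * G N := by
        rw [Finset.sum_congr rfl fun j hj => by rw [(Finset.mem_filter.1 hj).2],
          Finset.sum_const, nsmul_eq_mul]
    _ ≤ 2 * G N := mul_le_mul_of_nonneg_right
        (by exact_mod_cast (Finset.card_le_card hfiber).trans Finset.card_le_two) (hG N)

lemma sum_near_fracKernel_le (hr : 0 < r) (S : Finset ℕ) (i M : ℕ) :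
    ∑ j ∈ S with boxDist i j ≤ M, fracKernel r (boxDist i j) ≤
      6 * (M : ℝ) ^ ((r : ℝ) / (r + 2)) := by
  have hmaps : ∀ j ∈ {j ∈ S | boxDist i j ≤ M}, boxDist i j ∈ Finset.Icc 1 M := fun j hj =>
    Finset.mem_Icc.2 ⟨Nat.le_add_right _ _, (Finset.mem_filter.1 hj).2⟩
  linarith [sum_comp_boxDist_le (fracKernel_nonneg r) i hmaps, sum_fracKernel_le hr M]

lemma sum_far_inv_sq_le (S : Finset ℕ) (i M : ℕ) :
    ∑ j ∈ S with ¬ boxDist i j ≤ M, ((boxDist i j : ℝ) ^ 2)⁻¹ ≤ 4 / ((M : ℝ) + 1) := by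
  obtain ⟨L, hL⟩ := (S.image (boxDist i)).bddAbove
  have hmaps : ∀ j ∈ {j ∈ S | ¬ boxDist i j ≤ M}, boxDist i j ∈ Finset.Ioo M (L + 1) :=
    fun j hj => by
      have hj' := Finset.mem_filter.1 hj
      exact Finset.mem_Ioo.2 ⟨not_le.1 hj'.2, Nat.lt_succ_of_le
        (hL (Finset.mem_coe.2 (Finset.mem_image_of_mem _ hj'.1)))⟩
  have htail := sum_Ioo_inv_sq_le (α := ℝ) M (L + 1)
  have hfar := sum_comp_boxDist_le (G := fun N => ((N : ℝ) ^ 2)⁻¹)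
    (fun N => by positivity) i hmaps
  calc _ ≤ 2 * (2 / ((M : ℝ) + 1)) := hfar.trans (by linarith)
    _ = _ := by ring

lemma pow_mul_le_young {x k l : ℝ} (hx : 0 ≤ x) (hk : 0 ≤ k) (hl : 0 < l) (r : ℕ) :
    x ^ (r + 1) * k ≤ l * x ^ (r + 2) + (l ^ (r + 1))⁻¹ * k ^ (r + 2) := by
  rcases le_total k (l * x) with hkx | hkx
  · calc x ^ (r + 1) * k ≤ x ^ (r + 1) * (l * x) := by gcongr
      _ = l * x ^ (r + 2) := by ring
      _ ≤ _ := le_add_of_nonneg_right (by positivity)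
  · have hxk : x ≤ k / l := by rwa [le_div_iff₀ hl, mul_comm]
    calc x ^ (r + 1) * k ≤ (k / l) ^ (r + 1) * k := by gcongr
      _ = (l ^ (r + 1))⁻¹ * k ^ (r + 2) := by rw [div_pow]; field_simp; ring
      _ ≤ _ := le_add_of_nonneg_left (by positivity)

-- Near the diagonal `f` is replaced by its bound `a`; away from it Young's inequality makes the
-- kernel square summable. The cut-off `M` and the weight `l` are optimized in the next lemma.
lemma sum_pow_mul_fracKernel_le_split (hr : 0 < r) (hf : ∀ j, 0 ≤ f j) {a l : ℝ} (ha : 0 ≤ a)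
    (hl : 0 < l) {S : Finset ℕ} (hfa : ∀ j ∈ S, f j ≤ a) (i M : ℕ) :
    ∑ j ∈ S, f j ^ (r + 1) * fracKernel r (boxDist i j) ≤
      l * ∑ j ∈ S, f j ^ (r + 2) + a ^ (r + 1) * (6 * (M : ℝ) ^ ((r : ℝ) / (r + 2))) +
        (l ^ (r + 1))⁻¹ * (4 / ((M : ℝ) + 1)) := by
  have hnear : ∑ j ∈ S with boxDist i j ≤ M, f j ^ (r + 1) * fracKernel r (boxDist i j) ≤
      a ^ (r + 1) * (6 * (M : ℝ) ^ ((r : ℝ) / (r + 2))) := by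
    refine le_trans ?_ (mul_le_mul_of_nonneg_left (sum_near_fracKernel_le hr S i M)
      (pow_nonneg ha _))
    rw [Finset.mul_sum]
    exact Finset.sum_le_sum fun j hj => mul_le_mul_of_nonneg_right
      (pow_le_pow_left₀ (hf j) (hfa j (Finset.mem_filter.1 hj).1) _) (fracKernel_nonneg _ _)
  have hfar : ∑ j ∈ S with ¬ boxDist i j ≤ M, f j ^ (r + 1) * fracKernel r (boxDist i j) ≤
      l * ∑ j ∈ S, f j ^ (r + 2) + (l ^ (r + 1))⁻¹ * (4 / ((M : ℝ) + 1)) := by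
    calc _ ≤ ∑ j ∈ S with ¬ boxDist i j ≤ M,
          (l * f j ^ (r + 2) + (l ^ (r + 1))⁻¹ * ((boxDist i j : ℝ) ^ 2)⁻¹) :=
          Finset.sum_le_sum fun j _ => fracKernel_pow r (boxDist i j) ▸
            pow_mul_le_young (hf j) (fracKernel_nonneg _ _) hl r
      _ = l * ∑ j ∈ S with ¬ boxDist i j ≤ M, f j ^ (r + 2) +
          (l ^ (r + 1))⁻¹ * ∑ j ∈ S with ¬ boxDist i j ≤ M, ((boxDist i j : ℝ) ^ 2)⁻¹ := by
          rw [Finset.sum_add_distrib, Finset.mul_sum, Finset.mul_sum]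
      _ ≤ _ := by
          gcongr
          · exact fun j _ _ => pow_nonneg (hf j) _
          · exact Finset.filter_subset _ _
          · exact sum_far_inv_sq_le S i M
  rw [← Finset.sum_filter_add_sum_filter_not S fun j => boxDist i j ≤ M]
  linarith

lemma sum_pow_mul_fracKernel_le (hr : 0 < r) (hf : ∀ j, 0 ≤ f j) {a : ℝ} (ha : 0 < a)
    (has : a ≤ s) {S : Finset ℕ} (hfa : ∀ j ∈ S, f j ≤ a)
    (hS : ∑ j ∈ S, f j ^ (r + 2) ≤ s ^ (r + 2)) (i : ℕ) :
    ∑ j ∈ S, f j ^ (r + 1) * fracKernel r (boxDist i j) ≤ 11 * (a * s ^ r) := by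
  have hs : 0 < s := ha.trans_le has
  set R := (s / a) ^ (r + 2) with hR
  have hR₀ : 0 < R := by positivity
  have hfloor : (⌊R⌋₊ : ℝ) ^ ((r : ℝ) / (r + 2)) ≤ (s / a) ^ r := by
    calc _ ≤ R ^ ((r : ℝ) / (r + 2)) := by gcongr; exact Nat.floor_le hR₀.le
      _ = (s / a) ^ r := by
        rw [hR, ← Real.rpow_natCast, ← Real.rpow_mul (by positivity), ← Real.rpow_natCast]
        congr 1; push_cast; field_simp
  calc _ ≤ a / s ^ 2 * ∑ j ∈ S, f j ^ (r + 2) +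
        a ^ (r + 1) * (6 * (⌊R⌋₊ : ℝ) ^ ((r : ℝ) / (r + 2))) +
        ((a / s ^ 2) ^ (r + 1))⁻¹ * (4 / ((⌊R⌋₊ : ℝ) + 1)) :=
        sum_pow_mul_fracKernel_le_split hr hf ha.le (by positivity) hfa i _
    _ ≤ a / s ^ 2 * s ^ (r + 2) + a ^ (r + 1) * (6 * (s / a) ^ r) +
        ((a / s ^ 2) ^ (r + 1))⁻¹ * (4 / R) := by
        gcongr
        exact (Nat.lt_floor_add_one R).le
    _ = 11 * (a * s ^ r) := by
        rw [hR, div_pow, div_pow, div_pow]; field_simp; ring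

lemma sum_filter_le_pow_mul_fracKernel_le (hr : 0 < r) (hf : ∀ j, 0 ≤ f j) (hs : 0 ≤ s)
    {S : Finset ℕ} (hS : ∑ j ∈ S, f j ^ (r + 2) ≤ s ^ (r + 2)) {i : ℕ} (hi : i ∈ S) :
    ∑ j ∈ S with f j ≤ f i, f i ^ (r + 1) * f j ^ (r + 1) * fracKernel r (boxDist i j) ≤
      11 * s ^ r * f i ^ (r + 2) := by
  rcases (hf i).eq_or_lt with h₀ | h₀
  · simp [← h₀]
  have hfs : f i ≤ s := le_of_pow_le_pow_left₀ (Nat.succ_ne_zero (r + 1)) hs <|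
    (Finset.single_le_sum (f := fun j => f j ^ (r + 2)) (fun j _ => pow_nonneg (hf j) _) hi).trans
      hS
  have hsub : ∑ j ∈ S with f j ≤ f i, f j ^ (r + 2) ≤ s ^ (r + 2) :=
    (Finset.sum_le_sum_of_subset_of_nonneg (Finset.filter_subset _ _) fun j _ _ =>
      pow_nonneg (hf j) _).trans hS
  calc _ = f i ^ (r + 1) * ∑ j ∈ S with f j ≤ f i,
        f j ^ (r + 1) * fracKernel r (boxDist i j) := by
        rw [Finset.mul_sum]; exact Finset.sum_congr rfl fun j _ => mul_assoc _ _ _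
    _ ≤ f i ^ (r + 1) * (11 * (f i * s ^ r)) := by
        gcongr
        exact sum_pow_mul_fracKernel_le hr hf h₀ hfs (fun j hj => (Finset.mem_filter.1 hj).2)
          hsub i
    _ = _ := by ring

theorem discrete_hardy_littlewood_sobolev (hr : 0 < r) (hf : ∀ j, 0 ≤ f j) (hs : 0 ≤ s)
    (S : Finset ℕ) (hS : ∑ j ∈ S, f j ^ (r + 2) ≤ s ^ (r + 2)) :
    ∑ i ∈ S, ∑ j ∈ S, f i ^ (r + 1) * f j ^ (r + 1) * fracKernel r (boxDist i j) ≤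
      22 * s ^ (2 * (r + 1)) := by
  set T : ℕ → ℕ → ℝ := fun i j => f i ^ (r + 1) * f j ^ (r + 1) * fracKernel r (boxDist i j)
    with hT
  have hT₀ : ∀ i j, 0 ≤ T i j := fun i j =>
    mul_nonneg (mul_nonneg (pow_nonneg (hf i) _) (pow_nonneg (hf j) _)) (fracKernel_nonneg _ _)
  have hTsymm : ∀ i j, T i j = T j i := fun i j => by simp only [hT, boxDist_comm i j]; ring
  have hhalf : ∑ i ∈ S, ∑ j ∈ S, (if f j ≤ f i then T i j else 0) ≤ 11 * s ^ (2 * (r + 1)) := by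
    simp only [← Finset.sum_filter]
    calc _ ≤ ∑ i ∈ S, 11 * s ^ r * f i ^ (r + 2) :=
          Finset.sum_le_sum fun i hi => sum_filter_le_pow_mul_fracKernel_le hr hf hs hS hi
      _ ≤ 11 * s ^ r * s ^ (r + 2) := by rw [← Finset.mul_sum]; gcongr
      _ = _ := by ring
  calc _ ≤ ∑ i ∈ S, ∑ j ∈ S,
        ((if f j ≤ f i then T i j else 0) + (if f i ≤ f j then T j i else 0)) :=
        Finset.sum_le_sum fun i _ => Finset.sum_le_sum fun j _ => by
          have := hT₀ i j
          have := hTsymm i j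
          rcases le_total (f i) (f j) with h | h <;> split_ifs <;> linarith
    _ = ∑ i ∈ S, ∑ j ∈ S, (if f j ≤ f i then T i j else 0) +
        ∑ i ∈ S, ∑ j ∈ S, (if f j ≤ f i then T i j else 0) := by
        simp only [Finset.sum_add_distrib]
        exact congrArg _ Finset.sum_comm
    _ ≤ 22 * s ^ (2 * (r + 1)) := by linarith

end HardyLittlewoodSobolev

/-! ### Discrete Strichartz estimates and the bootstrap -/

section Strichartz

/-- The Gram matrix of `e` is bounded by `A` times the fractional kernel. For
`e j = U(-t_j) δ_{n_j}` with `t_j ∈ [j, j+1]` this is the dispersive decay of the propagator `U`. -/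
def IsGramBounded {H : Type*} [NormedAddCommGroup H] [InnerProductSpace ℂ H] (r : ℕ) (A : ℝ)
    (e : ℕ → H) : Prop :=
  ∀ i j, ‖inner ℂ (e i) (e j)‖ ≤ A * fracKernel r (boxDist i j)

/-- The oscillation of the curve `v` over the time box `[k, k+1]` is at most `ω k`. -/
def IsBoxOscBound {E : Type*} [NormedAddCommGroup E] (v : ℝ → E) (ω : ℕ → ℝ) : Prop :=
  ∀ (k : ℕ), ∀ t ∈ Set.Icc (k : ℝ) (k + 1), ∀ t' ∈ Set.Icc (k : ℝ) (k + 1), ‖v t' - v t‖ ≤ ω k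

variable {H : Type*} [NormedAddCommGroup H] [InnerProductSpace ℂ H] {r N : ℕ} {A : ℝ}
  {e : ℕ → H} {f : ℕ → ℝ} {s : ℝ}

-- The dual Strichartz estimate, by the `TT*` argument.
theorem IsGramBounded.norm_sum_smul_le (he : IsGramBounded r A e) (hr : 0 < r) (hA : 0 ≤ A)
    (hf : ∀ j, 0 ≤ f j) (hs : 0 ≤ s) (S : Finset ℕ)
    (hS : ∑ j ∈ S, f j ^ (r + 2) ≤ s ^ (r + 2)) {c : ℕ → ℂ} (hc : ∀ j, ‖c j‖ ≤ f j ^ (r + 1)) :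
    ‖∑ j ∈ S, c j • e j‖ ≤ Real.sqrt (22 * A) * s ^ (r + 1) := by
  have hsq : ‖∑ j ∈ S, c j • e j‖ ^ 2 ≤ 22 * A * (s ^ (r + 1)) ^ 2 := by
    have hself : ‖∑ j ∈ S, c j • e j‖ ^ 2 =
        ‖inner ℂ (∑ j ∈ S, c j • e j) (∑ j ∈ S, c j • e j)‖ := by
      rw [inner_self_eq_norm_sq_to_K]; simp
    rw [hself, sum_inner]
    calc _ ≤ ∑ i ∈ S, ∑ j ∈ S,
          A * (f i ^ (r + 1) * f j ^ (r + 1) * fracKernel r (boxDist i j)) := by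
          refine (norm_sum_le _ _).trans (Finset.sum_le_sum fun i _ => ?_)
          rw [inner_sum]
          refine (norm_sum_le _ _).trans (Finset.sum_le_sum fun j _ => ?_)
          rw [inner_smul_left, inner_smul_right, norm_mul, norm_mul, RCLike.norm_conj]
          have := hf i
          have := hf j
          calc _ ≤ f i ^ (r + 1) * (f j ^ (r + 1) * (A * fracKernel r (boxDist i j))) := by
                gcongr
                exacts [hc i, hc j, he i j]
            _ = _ := by ring
      _ = A * ∑ i ∈ S, ∑ j ∈ S, f i ^ (r + 1) * f j ^ (r + 1) * fracKernel r (boxDist i j) := by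
          simp only [Finset.mul_sum]
      _ ≤ A * (22 * s ^ (2 * (r + 1))) :=
          mul_le_mul_of_nonneg_left (discrete_hardy_littlewood_sobolev hr hf hs S hS) hA
      _ = _ := by ring
  have hsqrt := Real.sqrt_le_sqrt hsq
  rwa [Real.sqrt_sq (norm_nonneg _), Real.sqrt_mul (by positivity),
    Real.sqrt_sq (by positivity)] at hsqrt

lemma sum_inner_eq_summation_by_parts (x w : ℕ → H) (N : ℕ) :
    ∑ j ∈ Finset.range (N + 1), inner ℂ (x j) (w j) =
      inner ℂ (∑ j ∈ Finset.range (N + 1), x j) (w 0) +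
        ∑ k ∈ Finset.range N,
          inner ℂ (∑ j ∈ Finset.Ico (k + 1) (N + 1), x j) (w (k + 1) - w k) := by
  have htelescope : ∀ j, inner ℂ (x j) (w j) =
      inner ℂ (x j) (w 0) + ∑ k ∈ Finset.range j, inner ℂ (x j) (w (k + 1) - w k) := fun j => by
    rw [← inner_sum, Finset.sum_range_sub, ← inner_add_right, add_sub_cancel]
  rw [Finset.sum_congr rfl fun j _ => htelescope j, Finset.sum_add_distrib, sum_inner,
    Finset.sum_comm' (t' := Finset.range N) (s' := fun k => Finset.Ico (k + 1) (N + 1))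
      fun j k => by simp only [Finset.mem_range, Finset.mem_Ico]; lia]
  simp only [sum_inner]

lemma exists_norm_le_conj_mul_eq {ρ : ℝ} (hρ : 0 ≤ ρ) (z : ℂ) :
    ∃ c : ℂ, ‖c‖ ≤ ρ ∧ (starRingEnd ℂ) c * z = ((ρ * ‖z‖ : ℝ) : ℂ) := by
  rcases eq_or_ne z 0 with rfl | hz
  · exact ⟨0, by simpa using hρ, by simp⟩
  have hz' : (‖z‖ : ℂ) ≠ 0 := by exact_mod_cast norm_ne_zero_iff.2 hz
  refine ⟨((ρ / ‖z‖ : ℝ) : ℂ) * z, ?_, ?_⟩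
  · rw [norm_mul, Complex.norm_real, Real.norm_of_nonneg (by positivity),
      div_mul_cancel₀ _ (norm_ne_zero_iff.2 hz)]
  · rw [map_mul, Complex.conj_ofReal, mul_assoc, Complex.conj_mul']
    push_cast
    field_simp

-- Testing the dual estimate on the coefficients `c j` aligned with `⟨e j, w j⟩`; the variation of
-- `w` enters through summation by parts.
theorem IsGramBounded.le_mul_variation (he : IsGramBounded r A e) (hr : 0 < r) (hA : 0 ≤ A)
    (hf : ∀ j, 0 ≤ f j) (hs : 0 ≤ s) (hS : ∑ j ∈ Finset.range (N + 1), f j ^ (r + 2) = s ^ (r + 2))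
    {w : ℕ → H} (hfw : ∀ j, f j ≤ 2 * ‖inner ℂ (e j) (w j)‖) :
    s ≤ 2 * Real.sqrt (22 * A) * (‖w 0‖ + ∑ k ∈ Finset.range N, ‖w (k + 1) - w k‖) := by
  set B := ‖w 0‖ + ∑ k ∈ Finset.range N, ‖w (k + 1) - w k‖ with hB
  choose c hc hcz using fun j =>
    exists_norm_le_conj_mul_eq (pow_nonneg (hf j) (r + 1)) (inner ℂ (e j) (w j))
  have hdual : ∀ S ⊆ Finset.range (N + 1),
      ‖∑ j ∈ S, c j • e j‖ ≤ Real.sqrt (22 * A) * s ^ (r + 1) := fun S hSN =>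
    he.norm_sum_smul_le hr hA hf hs S (hS ▸ Finset.sum_le_sum_of_subset_of_nonneg hSN
      fun j _ _ => pow_nonneg (hf j) _) hc
  have hupper : ‖∑ j ∈ Finset.range (N + 1), inner ℂ (c j • e j) (w j)‖ ≤
      Real.sqrt (22 * A) * s ^ (r + 1) * B := by
    rw [sum_inner_eq_summation_by_parts, hB, mul_add, Finset.mul_sum]
    refine (norm_add_le _ _).trans (add_le_add ?_ ((norm_sum_le _ _).trans
      (Finset.sum_le_sum fun k _ => ?_)))
    · exact (norm_inner_le_norm _ _).trans
        (mul_le_mul_of_nonneg_right (hdual _ subset_rfl) (norm_nonneg _))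
    · refine (norm_inner_le_norm _ _).trans (mul_le_mul_of_nonneg_right (hdual _ fun j hj => ?_)
        (norm_nonneg _))
      exact Finset.mem_range.2 (Finset.mem_Ico.1 hj).2
  have hlower : s ^ (r + 2) ≤ 2 * ‖∑ j ∈ Finset.range (N + 1), inner ℂ (c j • e j) (w j)‖ := by
    simp only [inner_smul_left, hcz]
    rw [← Complex.ofReal_sum, Complex.norm_real, ← hS]
    refine le_trans ?_ (mul_le_mul_of_nonneg_left (le_abs_self _) zero_le_two)
    rw [Finset.mul_sum]
    refine Finset.sum_le_sum fun j _ => ?_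
    calc f j ^ (r + 2) = f j ^ (r + 1) * f j := pow_succ _ _
      _ ≤ f j ^ (r + 1) * (2 * ‖inner ℂ (e j) (w j)‖) :=
          mul_le_mul_of_nonneg_left (hfw j) (pow_nonneg (hf j) _)
      _ = _ := by ring
  rcases hs.eq_or_lt with h₀ | h₀
  · rw [← h₀]; positivity
  · refine le_of_mul_le_mul_left (a := s ^ (r + 1)) ?_ (by positivity)
    calc s ^ (r + 1) * s = s ^ (r + 2) := (pow_succ _ _).symm
      _ ≤ 2 * (Real.sqrt (22 * A) * s ^ (r + 1) * B) := hlower.trans (by linarith)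
      _ = _ := by ring

section BoxOscillation

variable {E : Type*} [NormedAddCommGroup E] {v : ℝ → E} {ω : ℕ → ℝ}

lemma left_mem_box (k : ℕ) : (k : ℝ) ∈ Set.Icc (k : ℝ) (k + 1) :=
  Set.left_mem_Icc.2 (by linarith)

lemma succ_mem_box (k : ℕ) : ((k + 1 : ℕ) : ℝ) ∈ Set.Icc (k : ℝ) (k + 1) := by
  rw [Nat.cast_succ]; exact Set.right_mem_Icc.2 (by linarith)

lemma IsBoxOscBound.nonneg (hv : IsBoxOscBound v ω) (k : ℕ) : 0 ≤ ω k :=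
  (norm_nonneg _).trans (hv k _ (left_mem_box k) _ (left_mem_box k))

lemma IsBoxOscBound.exists_tendsto [CompleteSpace E] (hv : IsBoxOscBound v ω) (hω : Summable ω) :
    ∃ l, Tendsto v atTop (𝓝 l) := by
  have hcauchy : CauchySeq fun k : ℕ => v k := cauchySeq_of_dist_le_of_summable _
    (fun k => by
      rw [dist_comm, dist_eq_norm]
      exact hv k _ (left_mem_box k) _ (succ_mem_box k)) hω
  obtain ⟨l, hl⟩ := cauchySeq_tendsto_of_complete hcauchy
  have hfloor : Tendsto (fun t : ℝ => v t - v (⌊t⌋₊ : ℕ)) atTop (𝓝 0) := by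
    refine squeeze_zero_norm' ?_ (hω.tendsto_atTop_zero.comp tendsto_nat_floor_atTop)
    filter_upwards [eventually_ge_atTop 0] with t ht
    exact hv _ _ (left_mem_box _) _ ⟨Nat.floor_le ht, (Nat.lt_floor_add_one t).le⟩
  exact ⟨l, by simpa using hfloor.add (hl.comp tendsto_nat_floor_atTop)⟩

lemma IsBoxOscBound.sum_norm_sub_le (hv : IsBoxOscBound v ω) {τ : ℕ → ℝ}
    (hτ : ∀ k : ℕ, τ k ∈ Set.Icc (k : ℝ) (k + 1)) (N : ℕ) :
    ∑ k ∈ Finset.range N, ‖v (τ (k + 1)) - v (τ k)‖ ≤ 2 * ∑ k ∈ Finset.range (N + 1), ω k := by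
  have hstep : ∀ k, ‖v (τ (k + 1)) - v (τ k)‖ ≤ ω (k + 1) + ω k := fun k => by
    rw [← sub_add_sub_cancel _ (v (k + 1 : ℕ))]
    exact (norm_add_le _ _).trans (add_le_add (hv _ _ (left_mem_box _) _ (hτ _))
      (hv _ _ (hτ _) _ (succ_mem_box _)))
  calc _ ≤ ∑ k ∈ Finset.range N, (ω (k + 1) + ω k) := Finset.sum_le_sum fun k _ => hstep k
    _ = (∑ k ∈ Finset.range (N + 1), ω k - ω 0) + (∑ k ∈ Finset.range (N + 1), ω k - ω N) := by
        rw [Finset.sum_add_distrib]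
        linarith [Finset.sum_range_succ' ω N, Finset.sum_range_succ ω N]
    _ ≤ _ := by linarith [hv.nonneg 0, hv.nonneg N]

end BoxOscillation

lemma exists_pow_eq_of_nonneg {x : ℝ} (hx : 0 ≤ x) (n : ℕ) (hn : n ≠ 0) :
    ∃ y, 0 ≤ y ∧ y ^ n = x :=
  ⟨x ^ (n⁻¹ : ℝ), Real.rpow_nonneg hx _, Real.rpow_inv_natCast_pow hx hn⟩

-- One step of the induction raises the sum by at most `1/2`, so the Strichartz estimate applies
-- with variation at most `3 m` and brings it back below `1/2`.
theorem IsGramBounded.sum_pow_le_half (he : IsGramBounded r A e) (hr : 0 < r) (hA : 0 ≤ A)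
    (hf : ∀ j, 0 ≤ f j) {m : ℝ} (hm : m ≤ 1 / 2) (hAm : 2 * Real.sqrt (22 * A) * (3 * m) ≤ 1 / 2)
    (hfm : ∀ j, f j ≤ m) {v : ℝ → H} (hv₀ : ∀ t, ‖v t‖ ≤ m)
    (hv : IsBoxOscBound v fun k => m * f k ^ (r + 2)) {τ : ℕ → ℝ}
    (hτ : ∀ k : ℕ, τ k ∈ Set.Icc (k : ℝ) (k + 1)) (hfv : ∀ j, f j ≤ 2 * ‖inner ℂ (e j) (v (τ j))‖)
    (n : ℕ) :
    ∑ j ∈ Finset.range n, f j ^ (r + 2) ≤ 1 / 2 := by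
  have hm₀ : 0 ≤ m := (norm_nonneg _).trans (hv₀ 0)
  induction n with
  | zero => simp
  | succ N ih =>
    have hterm : f N ^ (r + 2) ≤ 1 / 2 :=
      (pow_le_of_le_one (hf N) ((hfm N).trans (by linarith)) (by lia)).trans ((hfm N).trans hm)
    have hle_one : ∑ j ∈ Finset.range (N + 1), f j ^ (r + 2) ≤ 1 := by
      rw [Finset.sum_range_succ]; linarith
    obtain ⟨s, hs, hsum⟩ := exists_pow_eq_of_nonneg
      (Finset.sum_nonneg fun j (_ : j ∈ Finset.range (N + 1)) => pow_nonneg (hf j) (r + 2))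
      (r + 2) (by lia)
    have hvariation : ‖v (τ 0)‖ + ∑ k ∈ Finset.range N, ‖v (τ (k + 1)) - v (τ k)‖ ≤ 3 * m := by
      have hosc := hv.sum_norm_sub_le hτ N
      rw [← Finset.mul_sum] at hosc
      linarith [hv₀ (τ 0), mul_le_of_le_one_right hm₀ hle_one]
    have hs_half : s ≤ 1 / 2 :=
      (he.le_mul_variation hr hA hf hs hsum.symm hfv).trans
        ((mul_le_mul_of_nonneg_left hvariation (by positivity)).trans hAm)
    rw [← hsum]
    exact (pow_le_of_le_one hs (by linarith) (by lia)).trans hs_half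

theorem IsGramBounded.exists_tendsto [CompleteSpace H] (he : IsGramBounded r A e) (hr : 0 < r)
    (hA : 0 ≤ A) (hf : ∀ j, 0 ≤ f j) {m : ℝ} (hm : m ≤ 1 / 2)
    (hAm : 2 * Real.sqrt (22 * A) * (3 * m) ≤ 1 / 2) (hfm : ∀ j, f j ≤ m) {v : ℝ → H}
    (hv₀ : ∀ t, ‖v t‖ ≤ m) (hv : IsBoxOscBound v fun k => m * f k ^ (r + 2)) {τ : ℕ → ℝ}
    (hτ : ∀ k : ℕ, τ k ∈ Set.Icc (k : ℝ) (k + 1)) (hfv : ∀ j, f j ≤ 2 * ‖inner ℂ (e j) (v (τ j))‖) :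
    ∃ l, Tendsto v atTop (𝓝 l) :=
  hv.exists_tendsto <| (summable_of_sum_range_le (fun j => pow_nonneg (hf j) _)
    (he.sum_pow_le_half hr hA hf hm hAm hfm hv₀ hv hτ hfv)).mul_left m

end Strichartz

/-! ### The propagator on `ℓ²(ℤ)` -/

section UnitaryGroups

/-- `U` is a one-parameter group of linear isometries, Lipschitz in time with constant `B`. This
is what a skew-adjoint generator of norm at most `B` yields, stated without the generator. -/
structure IsIsometryGroup {H : Type*} [NormedAddCommGroup H] [NormedSpace ℂ H]
    (U : ℝ → H →ₗᵢ[ℂ] H) (B : ℝ) : Prop where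
  zero_apply : ∀ x, U 0 x = x
  add_apply : ∀ t s x, U (t + s) x = U t (U s x)
  norm_sub_le : ∀ t s x, ‖U t x - U s x‖ ≤ B * |t - s| * ‖x‖

namespace IsIsometryGroup

section Normed

variable {H : Type*} [NormedAddCommGroup H] [NormedSpace ℂ H] {U : ℝ → H →ₗᵢ[ℂ] H} {B : ℝ}

lemma apply_neg_apply (hU : IsIsometryGroup U B) (t : ℝ) (x : H) : U t (U (-t) x) = x := by
  rw [← hU.add_apply, add_neg_cancel, hU.zero_apply]

lemma conj {H' : Type*} [NormedAddCommGroup H'] [NormedSpace ℂ H'] (hU : IsIsometryGroup U B)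
    (e : H ≃ₗᵢ[ℂ] H') :
    IsIsometryGroup
      (fun t => e.toLinearIsometry.comp ((U t).comp e.symm.toLinearIsometry)) B where
  zero_apply x := by simp [hU.zero_apply]
  add_apply t s x := by simp [hU.add_apply]
  norm_sub_le t s x := by
    have h := hU.norm_sub_le t s (e.symm x)
    rw [LinearIsometryEquiv.norm_map, ← LinearIsometryEquiv.norm_map e, map_sub] at h
    exact h

lemma continuous_apply {Y : Type*} [TopologicalSpace Y] (hU : IsIsometryGroup U B) {τ : Y → ℝ}
    (hτ : Continuous τ) {x : Y → H} (hx : Continuous x) : Continuous fun y => U (τ y) (x y) := by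
  rw [continuous_iff_continuousAt]
  intro y₀
  rw [ContinuousAt, tendsto_iff_norm_sub_tendsto_zero]
  have hbound : Tendsto (fun y => ‖x y - x y₀‖ + B * |τ y - τ y₀| * ‖x y₀‖) (𝓝 y₀) (𝓝 0) := by
    have : Continuous fun y => ‖x y - x y₀‖ + B * |τ y - τ y₀| * ‖x y₀‖ := by fun_prop
    simpa using this.tendsto y₀
  refine squeeze_zero (fun _ => norm_nonneg _) (fun y => ?_) hbound
  calc ‖U (τ y) (x y) - U (τ y₀) (x y₀)‖
      = ‖U (τ y) (x y - x y₀) + (U (τ y) (x y₀) - U (τ y₀) (x y₀))‖ := by rw [map_sub]; abel_nf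
    _ ≤ _ := (norm_add_le _ _).trans
        (add_le_add ((U (τ y)).norm_map _).le (hU.norm_sub_le _ _ _))

end Normed

lemma inner_neg_apply {H : Type*} [NormedAddCommGroup H] [InnerProductSpace ℂ H]
    {U : ℝ → H →ₗᵢ[ℂ] H} {B : ℝ} (hU : IsIsometryGroup U B) (t : ℝ) (x y : H) :
    inner ℂ (U (-t) x) y = inner ℂ x (U t y) := by
  rw [← (U t).inner_map_map, hU.apply_neg_apply]

end IsIsometryGroup

section MultiplicationGroup

variable {X : Type*}

/-- The Fourier multiplier `e^{-i t h}` with real symbol `h`. -/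
def phaseMul (h : X → ℝ) (t : ℝ) (x : X) : ℂ :=
  Complex.exp (Complex.I * ((-(h x * t) : ℝ) : ℂ))

lemma norm_phaseMul (h : X → ℝ) (t : ℝ) (x : X) : ‖phaseMul h t x‖ = 1 :=
  Complex.norm_exp_I_mul_ofReal _

lemma phaseMul_add (h : X → ℝ) (t s : ℝ) (x : X) :
    phaseMul h (t + s) x = phaseMul h t x * phaseMul h s x := by
  rw [phaseMul, phaseMul, phaseMul, ← Complex.exp_add]
  congr 1
  push_cast
  ring

lemma norm_phaseMul_sub_le (h : X → ℝ) (t s : ℝ) (x : X) :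
    ‖phaseMul h t x - phaseMul h s x‖ ≤ |h x| * |t - s| := by
  have hfactor : phaseMul h t x - phaseMul h s x = phaseMul h s x * (phaseMul h (t - s) x - 1) := by
    rw [mul_sub, ← phaseMul_add, add_sub_cancel, mul_one]
  rw [hfactor, norm_mul, norm_phaseMul, one_mul]
  refine Real.norm_exp_I_mul_ofReal_sub_one_le.trans_eq ?_
  rw [norm_neg, norm_mul, Real.norm_eq_abs, Real.norm_eq_abs]

variable [MeasurableSpace X] {μ : Measure X} {h : X → ℝ}

lemma memLp_phaseMul_mul (hh : AEStronglyMeasurable h μ) (t : ℝ) (f : Lp ℂ 2 μ) :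
    MemLp (fun x => phaseMul h t x * f x) 2 μ := by
  have hmul : AEStronglyMeasurable (phaseMul h t) μ :=
    (by fun_prop : Continuous fun y : ℝ =>
      Complex.exp (Complex.I * ((-(y * t) : ℝ) : ℂ))).comp_aestronglyMeasurable hh
  refine (Lp.memLp f).of_le (hmul.mul (Lp.aestronglyMeasurable f))
    (Eventually.of_forall fun x => ?_)
  rw [norm_mul, norm_phaseMul, one_mul]

/-- Multiplication by `e^{-i t h}` on `L²`. -/
def phaseMulLp (hh : AEStronglyMeasurable h μ) (t : ℝ) : Lp ℂ 2 μ →ₗᵢ[ℂ] Lp ℂ 2 μ where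
  toFun f := (memLp_phaseMul_mul hh t f).toLp _
  map_add' f g := by
    rw [← MemLp.toLp_add]
    apply MemLp.toLp_congr
    filter_upwards [Lp.coeFn_add f g] with x hx
    rw [Pi.add_apply, hx, Pi.add_apply, mul_add]
  map_smul' c f := by
    rw [RingHom.id_apply, ← MemLp.toLp_const_smul]
    apply MemLp.toLp_congr
    filter_upwards [Lp.coeFn_smul c f] with x hx
    rw [hx, Pi.smul_apply, Pi.smul_apply, mul_smul_comm]
  norm_map' f := by
    change ‖(memLp_phaseMul_mul hh t f).toLp _‖ = _
    rw [Lp.norm_toLp, Lp.norm_def]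
    exact congrArg _ (eLpNorm_congr_norm_ae (Eventually.of_forall fun x => by
      rw [norm_mul, norm_phaseMul, one_mul]))

lemma coeFn_phaseMulLp (hh : AEStronglyMeasurable h μ) (t : ℝ) (f : Lp ℂ 2 μ) :
    phaseMulLp hh t f =ᵐ[μ] fun x => phaseMul h t x * f x :=
  MemLp.coeFn_toLp (memLp_phaseMul_mul hh t f)

lemma isIsometryGroup_phaseMulLp (hh : AEStronglyMeasurable h μ) {B : ℝ} (hB : ∀ x, |h x| ≤ B) :
    IsIsometryGroup (phaseMulLp hh) B where
  zero_apply f := by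
    apply Lp.ext
    filter_upwards [coeFn_phaseMulLp hh 0 f] with x hx
    simp [hx, phaseMul]
  add_apply t s f := by
    apply Lp.ext
    filter_upwards [coeFn_phaseMulLp hh (t + s) f, coeFn_phaseMulLp hh s f,
      coeFn_phaseMulLp hh t (phaseMulLp hh s f)] with x h₁ h₂ h₃
    rw [h₁, h₃, h₂, phaseMul_add, mul_assoc]
  norm_sub_le t s f := by
    apply Lp.norm_le_mul_norm_of_ae_le_mul
    filter_upwards [coeFn_phaseMulLp hh t f, coeFn_phaseMulLp hh s f,
      Lp.coeFn_sub (phaseMulLp hh t f) (phaseMulLp hh s f)] with x h₁ h₂ h₃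
    rw [h₃, Pi.sub_apply, h₁, h₂, ← sub_mul, norm_mul]
    gcongr
    exact (norm_phaseMul_sub_le h t s x).trans
      (mul_le_mul_of_nonneg_right (hB x) (abs_nonneg _))

end MultiplicationGroup

end UnitaryGroups

section Propagator

/-- The state space `ℓ²(ℤ)`. -/
abbrev L2Seq : Type := lp (fun _ : ℤ => ℂ) 2

instance fact_two_pi_pos : Fact (0 < 2 * Real.pi) := ⟨Real.two_pi_pos⟩

variable {α : ℝ}

lemma sigma1_periodic (α : ℝ) : Function.Periodic (sigma1 α) (2 * Real.pi) := fun ξ => by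
  refine tsum_congr fun k => ?_
  have hshift : ((k : ℝ) + 1) * (ξ + 2 * Real.pi) / 2 =
      ((k : ℝ) + 1) * ξ / 2 + ((k + 1 : ℕ) : ℝ) * Real.pi := by push_cast; ring
  rw [hshift, Real.sin_add_nat_mul_pi, mul_pow, ← pow_mul, mul_comm (k + 1) 2, pow_mul, neg_one_sq,
    one_pow, one_mul]

/-- The symbol `σ` on the circle `ℝ / 2πℤ`. -/
def circleSymbol (α : ℝ) : AddCircle (2 * Real.pi) → ℝ := (sigma1_periodic α).lift

lemma continuous_circleSymbol (hα : 0 < α) : Continuous (circleSymbol α) :=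
  (QuotientAddGroup.isQuotientMap_mk _).continuous_iff.2 (continuous_sigma1 hα)

lemma abs_circleSymbol_le (hα : 0 < α) (x : AddCircle (2 * Real.pi)) :
    |circleSymbol α x| ≤ ∑' k : ℕ, 1 / ((k : ℝ) + 1) ^ (1 + α) := by
  induction x using QuotientAddGroup.induction_on with
  | H ξ =>
    exact tsum_of_norm_bounded (summable_one_div_add_one_rpow hα).hasSum
      (norm_sin_sq_div_rpow_le α ξ)

/-- The propagator `U(t)` as an isometry of `ℓ²(ℤ)`: multiplication by `e^{-i t σ}` conjugated by
the Fourier series. -/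
def propagator (hα : 0 < α) (t : ℝ) : L2Seq →ₗᵢ[ℂ] L2Seq :=
  (fourierBasis (T := 2 * Real.pi)).repr.toLinearIsometry.comp
    ((phaseMulLp (continuous_circleSymbol hα).aestronglyMeasurable t).comp
      (fourierBasis (T := 2 * Real.pi)).repr.symm.toLinearIsometry)

lemma isIsometryGroup_propagator (hα : 0 < α) :
    IsIsometryGroup (propagator hα) (∑' k : ℕ, 1 / ((k : ℝ) + 1) ^ (1 + α)) :=
  (isIsometryGroup_phaseMulLp _ (abs_circleSymbol_le hα)).conj _

lemma Kker_neg (α t : ℝ) (n : ℤ) : Kker α t (-n) = Kker α t n := by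
  have hreflect := intervalIntegral.integral_comp_neg (a := -Real.pi) (b := Real.pi)
    (fun ξ : ℝ => Complex.exp (Complex.I * (((n : ℝ) * ξ - sigma1 α ξ * t : ℝ) : ℂ)))
  rw [neg_neg] at hreflect
  rw [Kker, Kker, ← hreflect]
  simp only [sigma1_neg, Int.cast_neg, neg_mul, mul_neg]

lemma propagator_single (hα : 0 < α) (t : ℝ) (m n : ℤ) :
    propagator hα t (lp.single 2 m (1 : ℂ)) n = Kker α t (n - m) := by
  set f := fourierBasis (T := 2 * Real.pi) m with hf
  have hrepr : propagator hα t (lp.single 2 m (1 : ℂ)) n =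
      fourierCoeff (phaseMulLp (continuous_circleSymbol hα).aestronglyMeasurable t f) n := by
    rw [hf, ← HilbertBasis.repr_symm_single, ← fourierBasis_repr]
    rfl
  have hae : fourierCoeff (phaseMulLp (continuous_circleSymbol hα).aestronglyMeasurable t f) n =
      fourierCoeff (fun x => phaseMul (circleSymbol α) t x * fourier m x) n := by
    refine congrFun (fourierCoeff_congr_ae ?_) n
    rw [hf, coe_fourierBasis]
    filter_upwards [coeFn_phaseMulLp (continuous_circleSymbol hα).aestronglyMeasurable t
      (fourierLp 2 m), coeFn_fourierLp (T := 2 * Real.pi) 2 m] with x h₁ h₂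
    rw [h₁, h₂]
  rw [hrepr, hae, fourierCoeff_eq_intervalIntegral _ n (-Real.pi), ← Kker_neg, Kker,
    show -Real.pi + 2 * Real.pi = Real.pi by ring, one_div]
  congr 2
  ext ξ
  rw [fourier_coe_apply, fourier_coe_apply, smul_eq_mul, phaseMul,
    show circleSymbol α (ξ : AddCircle (2 * Real.pi)) = sigma1 α ξ from rfl,
    ← Complex.exp_add, ← Complex.exp_add]
  congr 1
  have hpi : (Real.pi : ℂ) ≠ 0 := by exact_mod_cast Real.pi_ne_zero
  push_cast
  field_simp
  ring

theorem hasSum_Kker_mul (hα : 0 < α) (t : ℝ) (x : L2Seq) (n : ℤ) :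
    HasSum (fun m : ℤ => Kker α t (n - m) * x m) (propagator hα t x n) := by
  have hexpand := ((lp.hasSum_single (p := 2) (by norm_num) x).mapL
    (propagator hα t).toContinuousLinearMap).mapL (lp.evalCLM ℂ (fun _ : ℤ => ℂ) 2 n)
  refine hexpand.congr_fun fun m => ?_
  have hsmul : lp.single (E := fun _ : ℤ => ℂ) 2 m (x m) = x m • lp.single 2 m (1 : ℂ) := by
    rw [← lp.single_smul, smul_eq_mul, mul_one]
  rw [hsmul, map_smul, map_smul, smul_eq_mul, mul_comm]
  exact congrArg (x m * ·) (propagator_single hα t m n).symm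

lemma propagator_apply (hα : 0 < α) (t : ℝ) (x : L2Seq) (n : ℤ) :
    propagator hα t x n = Uprop α t x n := (hasSum_Kker_mul hα t x n).tsum_eq.symm

lemma inner_single_one (n : ℤ) (x : L2Seq) : inner ℂ (lp.single 2 n (1 : ℂ)) x = x n := by
  rw [lp.inner_single_left]
  simp

lemma inner_propagator_neg_single (hα : 0 < α) (t : ℝ) (n : ℤ) (x : L2Seq) :
    inner ℂ (propagator hα (-t) (lp.single 2 n (1 : ℂ))) x = propagator hα t x n := by
  rw [(isIsometryGroup_propagator hα).inner_neg_apply, inner_single_one]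

lemma norm_Kker_le_one (α t : ℝ) (n : ℤ) : ‖Kker α t n‖ ≤ 1 := by
  have htriv := norm_oscInt_le_abs_sub (fun ξ => (n : ℝ) * ξ - sigma1 α ξ * t) (-Real.pi) Real.pi
  rw [sub_neg_eq_add, ← two_mul, abs_of_pos Real.two_pi_pos] at htriv
  rw [Kker, norm_smul, norm_inv, Real.norm_of_nonneg Real.two_pi_pos.le,
    inv_mul_le_iff₀ Real.two_pi_pos, mul_one]
  exact htriv

lemma boxDist_le_three_mul {i j : ℕ} {t s : ℝ} (ht : t ∈ Set.Icc (i : ℝ) (i + 1))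
    (hs : s ∈ Set.Icc (j : ℝ) (j + 1)) : (boxDist i j : ℝ) ≤ 3 * max 1 |t - s| := by
  have hdist : (boxDist i j : ℝ) = 1 + |(i : ℝ) - j| := by
    rw [boxDist, Nat.cast_add, Nat.cast_one]
    rcases le_total i j with hij | hij
    · rw [Nat.dist_eq_sub_of_le hij, Nat.cast_sub hij, abs_sub_comm,
        abs_of_nonneg (sub_nonneg.2 (Nat.cast_le.2 hij))]
    · rw [Nat.dist_eq_sub_of_le_right hij, Nat.cast_sub hij,
        abs_of_nonneg (sub_nonneg.2 (Nat.cast_le.2 hij))]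
  have hclose : |(i : ℝ) - j| ≤ |t - s| + 1 := by
    rw [abs_le]
    constructor <;> linarith [neg_abs_le (t - s), le_abs_self (t - s), ht.1, ht.2, hs.1, hs.2]
  linarith [le_max_left 1 |t - s|, le_max_right 1 |t - s|]

lemma HasKernelDecay.exists_norm_le_max {ρ : ℝ} (h : HasKernelDecay α ρ) :
    ∃ C, 0 ≤ C ∧ ∀ t n, ‖Kker α t n‖ ≤ C * (max 1 |t|) ^ (-ρ) := by
  obtain ⟨C, hC, hdecay⟩ := h
  refine ⟨1 + C, by positivity, fun t n => ?_⟩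
  rcases le_total |t| 1 with ht | ht
  · rw [max_eq_left ht, Real.one_rpow, mul_one]
    exact (norm_Kker_le_one α t n).trans (le_add_of_nonneg_right hC)
  · rw [max_eq_right ht]
    refine (hdecay t (abs_pos.1 (zero_lt_one.trans_le ht)) n).trans ?_
    gcongr
    exact le_add_of_nonneg_left zero_le_one

theorem HasKernelDecay.exists_isGramBounded {r : ℕ} (h : HasKernelDecay α (2 / ((r : ℝ) + 2)))
    (hα : 0 < α) :
    ∃ A, 0 ≤ A ∧ ∀ (τ : ℕ → ℝ) (ν : ℕ → ℤ), (∀ k : ℕ, τ k ∈ Set.Icc (k : ℝ) (k + 1)) →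
      IsGramBounded r A fun k => propagator hα (-(τ k)) (lp.single 2 (ν k) (1 : ℂ)) := by
  obtain ⟨C, hC, hdecay⟩ := h.exists_norm_le_max
  set ρ := 2 / ((r : ℝ) + 2)
  have hρ : 0 ≤ ρ := by positivity
  refine ⟨C * 3 ^ ρ, by positivity, fun τ ν hτ i j => ?_⟩
  rw [inner_propagator_neg_single, ← (isIsometryGroup_propagator hα).add_apply, propagator_single]
  refine (hdecay _ _).trans ?_
  have hd : (0 : ℝ) < boxDist i j := Nat.cast_pos.2 (Nat.add_pos_left one_pos _)
  have hthird : (boxDist i j : ℝ) / 3 ≤ max 1 |τ i + -(τ j)| := by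
    rw [div_le_iff₀ three_pos, mul_comm]
    exact boxDist_le_three_mul (hτ i) (hτ j)
  calc C * (max 1 |τ i + -(τ j)|) ^ (-ρ) ≤ C * ((boxDist i j : ℝ) / 3) ^ (-ρ) := by
        exact mul_le_mul_of_nonneg_left
          (Real.rpow_le_rpow_of_nonpos (by positivity) hthird (neg_nonpos.2 hρ)) hC
    _ = C * 3 ^ ρ * fracKernel r (boxDist i j) := by
        rw [fracKernel, Real.div_rpow hd.le (by norm_num), Real.rpow_neg (x := 3) (by norm_num),
          div_inv_eq_mul]
        ring

end Propagator

/-! ### Global norm-preserving flows -/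

section GlobalFlow

open Metric NNReal

variable {E : Type*} [NormedAddCommGroup E]

section IntegralCurves

variable [NormedSpace ℝ E] {F : ℝ → E → E} {K L : ℝ≥0} {γ γ' : ℝ → E}

lemma exists_isIntegralCurveOn_ball [CompleteSpace E] (hK : ∀ t, LipschitzWith K (F t))
    (hc : ∀ x, Continuous fun t => F t x) (hL : ∀ t x, ‖F t x‖ ≤ L) (x₀ : E) (R : ℝ≥0) :
    ∃ γ : ℝ → E, γ 0 = x₀ ∧ IsIntegralCurveOn γ F (ball 0 R) := by
  have hP : IsPicardLindelof F (⟨0, by simp⟩ : Set.Icc (-(R : ℝ)) R) x₀ (L * R) 0 L K :=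
    ⟨fun t _ => (hK t).lipschitzOnWith, fun x _ => (hc x).continuousOn, fun t _ x _ => hL t x,
      by simp⟩
  obtain ⟨γ, hγ₀, hγ⟩ := hP.exists_eq_forall_mem_Icc_hasDerivWithinAt₀
  refine ⟨γ, hγ₀, IsIntegralCurveOn.mono hγ ?_⟩
  rw [Real.ball_eq_Ioo, zero_sub, zero_add]
  exact Set.Ioo_subset_Icc_self

lemma eqOn_ball_of_isIntegralCurveOn (hK : ∀ t, LipschitzWith K (F t)) {R : ℝ} (hR : 0 < R)
    (hγ : IsIntegralCurveOn γ F (ball 0 R)) (hγ' : IsIntegralCurveOn γ' F (ball 0 R))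
    (h₀ : γ 0 = γ' 0) : Set.EqOn γ γ' (ball 0 R) := by
  rw [Real.ball_eq_Ioo] at hγ hγ' ⊢
  have hderiv : ∀ {δ : ℝ → E}, IsIntegralCurveOn δ F (Set.Ioo (0 - R) (0 + R)) →
      ∀ t ∈ Set.Ioo (0 - R) (0 + R), HasDerivAt δ (F t (δ t)) t ∧ δ t ∈ Set.univ :=
    fun hδ t ht => ⟨(hδ t ht).hasDerivAt (isOpen_Ioo.mem_nhds ht), trivial⟩
  exact ODE_solution_unique_of_mem_Ioo (fun t _ => (hK t).lipschitzOnWith) (by simpa using hR)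
    (hderiv hγ) (hderiv hγ') h₀

theorem exists_isIntegralCurve [CompleteSpace E] (hK : ∀ t, LipschitzWith K (F t))
    (hc : ∀ x, Continuous fun t => F t x) (hL : ∀ t x, ‖F t x‖ ≤ L) (x₀ : E) :
    ∃ γ : ℝ → E, γ 0 = x₀ ∧ IsIntegralCurve γ F := by
  choose γ hγ₀ hγ using fun N : ℕ => exists_isIntegralCurveOn_ball hK hc hL x₀ (N + 1)
  push_cast at hγ
  have hagree_of_le : ∀ N M : ℕ, N ≤ M → Set.EqOn (γ N) (γ M) (ball 0 (N + 1)) :=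
    fun N M hNM => eqOn_ball_of_isIntegralCurveOn hK (by positivity) (hγ N)
      ((hγ M).mono (ball_subset_ball (by gcongr))) (by rw [hγ₀, hγ₀])
  have hmem : ∀ t : ℝ, t ∈ ball (0 : ℝ) (⌈|t|⌉₊ + 1) := fun t => by
    rw [mem_ball_zero_iff, Real.norm_eq_abs]
    exact (Nat.le_ceil _).trans_lt (lt_add_one _)
  have hagree : ∀ (N : ℕ), Set.EqOn (fun t => γ ⌈|t|⌉₊ t) (γ N) (ball 0 (N + 1)) := by
    intro N t ht
    rcases le_total N ⌈|t|⌉₊ with h | h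
    · exact (hagree_of_le _ _ h ht).symm
    · exact hagree_of_le _ _ h (hmem t)
  refine ⟨fun t => γ ⌈|t|⌉₊ t, hγ₀ _, fun t => ?_⟩
  have hnhds := isOpen_ball.mem_nhds (hmem t)
  exact ((hγ _ t (hmem t)).hasDerivAt hnhds).congr_of_eventuallyEq
    (eventually_of_mem hnhds (hagree _))

end IntegralCurves

section RadialRetraction

variable [NormedSpace ℝ E]

/-- The radial retraction onto the closed unit ball. It extends vector fields given on the ball to
the whole space. -/
def radialRetraction (v : E) : E := (max 1 ‖v‖)⁻¹ • v

lemma radialRetraction_mem_closedBall (v : E) : radialRetraction v ∈ closedBall 0 1 := by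
  rw [mem_closedBall_zero_iff, radialRetraction, norm_smul, norm_inv,
    Real.norm_of_nonneg (by positivity), inv_mul_le_iff₀ (by positivity), mul_one]
  exact le_max_right _ _

lemma radialRetraction_of_norm_le_one {v : E} (hv : ‖v‖ ≤ 1) : radialRetraction v = v := by
  rw [radialRetraction, max_eq_left hv, inv_one, one_smul]

lemma dist_radialRetraction_le_of_norm_le {v w : E} (hvw : ‖v‖ ≤ ‖w‖) :
    dist (radialRetraction v) (radialRetraction w) ≤ 2 * dist v w := by
  rw [dist_eq_norm, dist_eq_norm, radialRetraction, radialRetraction]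
  set a := max 1 ‖v‖
  set b := max 1 ‖w‖
  have ha : 0 < a := by positivity
  have hb : 1 ≤ b := le_max_left _ _
  have hinv : b⁻¹ ≤ a⁻¹ := inv_anti₀ ha (max_le_max le_rfl hvw)
  have hb_inv : b⁻¹ ≤ 1 := inv_le_one_of_one_le₀ hb
  have hba : b - a ≤ ‖v - w‖ := by
    refine (le_abs_self _).trans ((abs_max_sub_max_le_max _ _ _ _).trans ?_)
    rw [sub_self, abs_zero, abs_sub_comm]
    exact max_le (norm_nonneg _) (abs_norm_sub_norm_le v w)
  calc ‖a⁻¹ • v - b⁻¹ • w‖ = ‖b⁻¹ • (v - w) + (a⁻¹ - b⁻¹) • v‖ := by congr 1; module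
    _ ≤ b⁻¹ * ‖v - w‖ + (a⁻¹ - b⁻¹) * ‖v‖ := by
        refine (norm_add_le _ _).trans_eq ?_
        rw [norm_smul, norm_smul, Real.norm_of_nonneg (by positivity),
          Real.norm_of_nonneg (sub_nonneg.2 hinv)]
    _ ≤ b⁻¹ * ‖v - w‖ + (a⁻¹ - b⁻¹) * a := by
        have := mul_le_mul_of_nonneg_left (le_max_right 1 ‖v‖) (sub_nonneg.2 hinv)
        linarith
    _ = b⁻¹ * ‖v - w‖ + b⁻¹ * (b - a) := by
        field_simp
    _ ≤ 1 * ‖v - w‖ + 1 * ‖v - w‖ :=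
        add_le_add (mul_le_mul_of_nonneg_right hb_inv (norm_nonneg _))
          ((mul_le_mul_of_nonneg_left hba (by positivity)).trans
            (mul_le_mul_of_nonneg_right hb_inv (norm_nonneg _)))
    _ = 2 * ‖v - w‖ := by ring

lemma lipschitzWith_radialRetraction : LipschitzWith 2 (radialRetraction : E → E) :=
  LipschitzWith.of_dist_le_mul fun v w => by
    rcases le_total ‖v‖ ‖w‖ with h | h
    · exact dist_radialRetraction_le_of_norm_le h
    · rw [dist_comm, dist_comm v]
      exact dist_radialRetraction_le_of_norm_le h

end RadialRetraction

section NormConservation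

variable [InnerProductSpace ℂ E] {F : ℝ → E → E} {K L : ℝ≥0} {γ : ℝ → E}

lemma norm_eq_of_isIntegralCurve (hγ : IsIntegralCurve γ F)
    (hF : ∀ t, (inner ℂ (γ t) (F t (γ t))).re = 0) (t : ℝ) : ‖γ t‖ = ‖γ 0‖ := by
  have hderiv : ∀ t, HasDerivAt (fun t => inner ℂ (γ t) (γ t)) 0 t := fun t => by
    have hinner := HasDerivAt.inner ℂ (hγ t) (hγ t)
    rwa [← inner_conj_symm (F t (γ t)) (γ t), Complex.add_conj, hF, mul_zero, Complex.ofReal_zero]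
      at hinner
  have hconst := is_const_of_deriv_eq_zero (fun t => (hderiv t).differentiableAt)
    (fun t => (hderiv t).deriv) t 0
  rw [← sq_eq_sq₀ (norm_nonneg _) (norm_nonneg _), ← inner_self_eq_norm_sq (𝕜 := ℂ),
    ← inner_self_eq_norm_sq (𝕜 := ℂ), hconst]

-- The field is composed with the radial retraction, which makes it globally Lipschitz and bounded
-- and keeps it orthogonal to the position, so the curve never leaves the ball.
theorem exists_isIntegralCurve_norm_eq [CompleteSpace E]
    (hK : ∀ t, LipschitzOnWith K (F t) (closedBall 0 1))
    (hc : ∀ x ∈ closedBall (0 : E) 1, Continuous fun t => F t x)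
    (hL : ∀ t, ∀ x ∈ closedBall (0 : E) 1, ‖F t x‖ ≤ L)
    (hF : ∀ t, ∀ x ∈ closedBall (0 : E) 1, (inner ℂ x (F t x)).re = 0) {x₀ : E} (hx₀ : ‖x₀‖ ≤ 1) :
    ∃ γ : ℝ → E, γ 0 = x₀ ∧ (∀ t, ‖γ t‖ = ‖x₀‖) ∧ IsIntegralCurve γ F := by
  have hmem := radialRetraction_mem_closedBall (E := E)
  obtain ⟨γ, hγ₀, hγ⟩ := exists_isIntegralCurve (F := fun t x => F t (radialRetraction x))
    (fun t => lipschitzOnWith_univ.1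
      ((hK t).comp lipschitzWith_radialRetraction.lipschitzOnWith fun x _ => hmem x))
    (fun x => hc _ (hmem x)) (fun t x => hL t _ (hmem x)) x₀
  have hnorm : ∀ t, ‖γ t‖ = ‖x₀‖ := fun t => by
    rw [← hγ₀]
    refine norm_eq_of_isIntegralCurve hγ (fun t => ?_) t
    have horth := hF t _ (hmem (γ t))
    rw [show inner ℂ (radialRetraction (γ t)) _ = _ from inner_smul_left_eq_smul ..,
      Complex.smul_re, smul_eq_mul] at horth
    exact (mul_eq_zero.1 horth).resolve_left (by positivity)
  refine ⟨γ, hγ₀, hnorm, fun t => ?_⟩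
  simpa only [radialRetraction_of_norm_le_one ((hnorm t).trans_le hx₀)] using hγ t

end NormConservation

end GlobalFlow

/-! ### The power nonlinearity and the flow in the interaction picture -/

section PowerNonlinearity

open Metric

variable {p : ℝ}

section Pointwise

variable {E : Type*} [NormedAddCommGroup E] [NormedSpace ℝ E]

/-- The pointwise power nonlinearity `|z|^(p-1) z`. -/
def powNonlinearity (p : ℝ) (z : E) : E := ‖z‖ ^ (p - 1) • z

lemma norm_powNonlinearity (p : ℝ) (z : E) : ‖powNonlinearity p z‖ = ‖z‖ ^ (p - 1) * ‖z‖ := by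
  rw [powNonlinearity, norm_smul, Real.norm_of_nonneg (by positivity)]

lemma rpow_sub_rpow_mul_le {q a b : ℝ} (hq : 0 ≤ q) (ha : 0 ≤ a) (hab : a ≤ b) (hb : b ≤ 1) :
    (b ^ q - a ^ q) * a ≤ q * (b - a) := by
  rcases ha.eq_or_lt with rfl | ha
  · rw [mul_zero]
    exact mul_nonneg hq (sub_nonneg.2 hab)
  have hderiv_le : ∀ x ∈ Set.Icc a b, ‖q * x ^ (q - 1)‖ ≤ q / a := fun x hx => by
    have hx₀ : 0 < x := ha.trans_le hx.1
    rw [Real.norm_of_nonneg (by positivity), Real.rpow_sub_one hx₀.ne', div_eq_mul_one_div q]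
    gcongr
    · exact Real.rpow_le_one hx₀.le (hx.2.trans hb) hq
    · exact hx.1
  have hmean := (convex_Icc a b).norm_image_sub_le_of_norm_hasDerivWithin_le
    (fun x hx => (Real.hasDerivAt_rpow_const (Or.inl (ha.trans_le hx.1).ne')).hasDerivWithinAt)
    hderiv_le (Set.left_mem_Icc.2 hab) (Set.right_mem_Icc.2 hab)
  rw [Real.norm_of_nonneg (sub_nonneg.2 hab), div_mul_eq_mul_div, le_div_iff₀ ha] at hmean
  exact (mul_le_mul_of_nonneg_right (le_abs_self _) ha.le).trans hmean

lemma norm_powNonlinearity_sub_le_of_norm_le (hp : 1 ≤ p) {z w : E} (hzw : ‖z‖ ≤ ‖w‖)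
    (hw : ‖w‖ ≤ 1) : ‖powNonlinearity p w - powNonlinearity p z‖ ≤ p * ‖w - z‖ := by
  have hq : 0 ≤ p - 1 := sub_nonneg.2 hp
  have hmono : ‖z‖ ^ (p - 1) ≤ ‖w‖ ^ (p - 1) := Real.rpow_le_rpow (norm_nonneg _) hzw hq
  calc ‖powNonlinearity p w - powNonlinearity p z‖
      = ‖‖w‖ ^ (p - 1) • (w - z) + (‖w‖ ^ (p - 1) - ‖z‖ ^ (p - 1)) • z‖ := by
        rw [powNonlinearity, powNonlinearity]
        congr 1
        module
    _ ≤ ‖w‖ ^ (p - 1) * ‖w - z‖ + (‖w‖ ^ (p - 1) - ‖z‖ ^ (p - 1)) * ‖z‖ := by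
        refine (norm_add_le _ _).trans_eq ?_
        rw [norm_smul, norm_smul, Real.norm_of_nonneg (by positivity),
          Real.norm_of_nonneg (sub_nonneg.2 hmono)]
    _ ≤ 1 * ‖w - z‖ + (p - 1) * (‖w‖ - ‖z‖) :=
        add_le_add (mul_le_mul_of_nonneg_right (Real.rpow_le_one (norm_nonneg _) hw hq)
          (norm_nonneg _)) (rpow_sub_rpow_mul_le hq (norm_nonneg _) hzw hw)
    _ ≤ 1 * ‖w - z‖ + (p - 1) * ‖w - z‖ := by
        gcongr
        exact norm_sub_norm_le _ _
    _ = p * ‖w - z‖ := by ring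

lemma norm_powNonlinearity_sub_le (hp : 1 ≤ p) {z w : E} (hz : ‖z‖ ≤ 1) (hw : ‖w‖ ≤ 1) :
    ‖powNonlinearity p z - powNonlinearity p w‖ ≤ p * ‖z - w‖ := by
  rcases le_total ‖z‖ ‖w‖ with h | h
  · rw [norm_sub_rev, norm_sub_rev z]
    exact norm_powNonlinearity_sub_le_of_norm_le hp h hw
  · exact norm_powNonlinearity_sub_le_of_norm_le hp h hz

end Pointwise

lemma L2Seq.norm_apply_le (x : L2Seq) (n : ℤ) : ‖x n‖ ≤ ‖x‖ :=
  lp.norm_apply_le_norm two_ne_zero x n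

lemma norm_powNonlinearity_apply_le (hp : 1 ≤ p) {x : L2Seq} {s : ℝ} (hs : ∀ n, ‖x n‖ ≤ s)
    (n : ℤ) : ‖powNonlinearity p (x n)‖ ≤ ‖((s ^ (p - 1) : ℝ) • x) n‖ := by
  have hs₀ : 0 ≤ s := (norm_nonneg _).trans (hs n)
  rw [norm_powNonlinearity, lp.coeFn_smul, Pi.smul_apply, norm_smul,
    Real.norm_of_nonneg (by positivity)]
  exact mul_le_mul_of_nonneg_right
    (Real.rpow_le_rpow (norm_nonneg _) (hs n) (sub_nonneg.2 hp)) (norm_nonneg _)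

/-- The power nonlinearity applied sitewise to an `ℓ²` sequence. -/
def powL2 (hp : 1 ≤ p) (x : L2Seq) : L2Seq :=
  ⟨fun n => powNonlinearity p (x n),
    (lp.memℓp _).mono' (norm_powNonlinearity_apply_le hp x.norm_apply_le)⟩

lemma powL2_apply (hp : 1 ≤ p) (x : L2Seq) (n : ℤ) : powL2 hp x n = powNonlinearity p (x n) := rfl

lemma norm_powL2_le (hp : 1 ≤ p) {x : L2Seq} {s : ℝ} (hs : ∀ n, ‖x n‖ ≤ s) :
    ‖powL2 hp x‖ ≤ s ^ (p - 1) * ‖x‖ := by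
  have hs₀ : 0 ≤ s := (norm_nonneg _).trans (hs 0)
  refine (lp.norm_mono two_ne_zero (norm_powNonlinearity_apply_le hp hs)).trans_eq ?_
  rw [norm_smul, Real.norm_of_nonneg (by positivity)]

lemma lipschitzOnWith_powL2 (hp : 1 ≤ p) :
    LipschitzOnWith p.toNNReal (powL2 hp) (closedBall 0 1) :=
  LipschitzOnWith.of_dist_le_mul fun x hx y hy => by
    rw [mem_closedBall_zero_iff] at hx hy
    have hp₀ : 0 ≤ p := zero_le_one.trans hp
    have hmono : ‖powL2 hp x - powL2 hp y‖ ≤ ‖p • (x - y)‖ :=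
      lp.norm_mono two_ne_zero fun n => by
        rw [lp.coeFn_smul, Pi.smul_apply, norm_smul, Real.norm_of_nonneg hp₀]
        exact norm_powNonlinearity_sub_le hp ((x.norm_apply_le n).trans hx)
          ((y.norm_apply_le n).trans hy)
    rw [Real.coe_toNNReal _ hp₀, dist_eq_norm, dist_eq_norm]
    exact hmono.trans_eq (by rw [norm_smul, Real.norm_of_nonneg hp₀])

lemma im_inner_powL2_self (hp : 1 ≤ p) (x : L2Seq) : (inner ℂ x (powL2 hp x)).im = 0 := by
  have hreal : ∀ n, inner ℂ (x n) (powL2 hp x n) = ((‖x n‖ ^ (p - 1) * ‖x n‖ ^ 2 : ℝ) : ℂ) :=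
    fun n => by
      rw [powL2_apply, powNonlinearity, inner_smul_right_eq_smul, inner_self_eq_norm_sq_to_K,
        Complex.real_smul]
      push_cast
      rfl
  rw [lp.inner_eq_tsum, tsum_congr hreal, ← Complex.ofReal_tsum, Complex.ofReal_im]

end PowerNonlinearity

section InteractionPicture

open Metric

variable {U : ℝ → L2Seq →ₗᵢ[ℂ] L2Seq} {B p : ℝ}

/-- The vector field `i U(-t) (|U(t) v|^(p-1) U(t) v)` of the interaction picture `v = U(-t) u`, in
which the linear evolution has been removed. -/
def interactionField (U : ℝ → L2Seq →ₗᵢ[ℂ] L2Seq) (hp : 1 ≤ p) (t : ℝ) (v : L2Seq) : L2Seq :=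
  Complex.I • U (-t) (powL2 hp (U t v))

lemma map_mem_closedBall_zero {v : L2Seq} {R : ℝ} (t : ℝ) (hv : v ∈ closedBall (0 : L2Seq) R) :
    U t v ∈ closedBall (0 : L2Seq) R := by
  rwa [mem_closedBall_zero_iff, LinearIsometry.norm_map, ← mem_closedBall_zero_iff]

lemma norm_interactionField (hp : 1 ≤ p) (t : ℝ) (v : L2Seq) :
    ‖interactionField U hp t v‖ = ‖powL2 hp (U t v)‖ := by
  rw [interactionField, norm_smul, LinearIsometry.norm_map, Complex.norm_I, one_mul]

lemma norm_interactionField_le (hp : 1 ≤ p) {t : ℝ} {v : L2Seq} {s : ℝ}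
    (hs : ∀ n, ‖U t v n‖ ≤ s) : ‖interactionField U hp t v‖ ≤ s ^ (p - 1) * ‖v‖ := by
  rw [norm_interactionField, ← (U t).norm_map v]
  exact norm_powL2_le hp hs

lemma norm_interactionField_le_one (hp : 1 ≤ p) (t : ℝ) {v : L2Seq} (hv : ‖v‖ ≤ 1) :
    ‖interactionField U hp t v‖ ≤ 1 := by
  refine (norm_interactionField_le (s := 1) hp fun n => ?_).trans ?_
  · exact ((U t v).norm_apply_le n).trans (((U t).norm_map v).trans_le hv)
  · rwa [Real.one_rpow, one_mul]

lemma lipschitzOnWith_interactionField (hp : 1 ≤ p) (t : ℝ) :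
    LipschitzOnWith p.toNNReal (interactionField U hp t) (closedBall 0 1) :=
  LipschitzOnWith.of_dist_le_mul fun v hv w hw => by
    rw [interactionField, interactionField, dist_eq_norm, ← smul_sub, ← map_sub, norm_smul,
      Complex.norm_I, one_mul, LinearIsometry.norm_map, ← dist_eq_norm, ← (U t).dist_map v]
    exact (lipschitzOnWith_powL2 hp).dist_le_mul _ (map_mem_closedBall_zero t hv) _
      (map_mem_closedBall_zero t hw)

lemma continuous_powL2_comp (hU : IsIsometryGroup U B) (hp : 1 ≤ p) {v : ℝ → L2Seq}
    (hv : Continuous v) (hv₁ : ∀ t, ‖v t‖ ≤ 1) : Continuous fun t => powL2 hp (U t (v t)) :=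
  (lipschitzOnWith_powL2 hp).continuousOn.comp_continuous (hU.continuous_apply continuous_id hv)
    fun t => map_mem_closedBall_zero t (mem_closedBall_zero_iff.2 (hv₁ t))

lemma continuous_interactionField_comp (hU : IsIsometryGroup U B) (hp : 1 ≤ p) {v : ℝ → L2Seq}
    (hv : Continuous v) (hv₁ : ∀ t, ‖v t‖ ≤ 1) :
    Continuous fun t => interactionField U hp t (v t) :=
  (hU.continuous_apply continuous_neg (continuous_powL2_comp hU hp hv hv₁)).const_smul Complex.I

lemma re_inner_interactionField_self (hU : IsIsometryGroup U B) (hp : 1 ≤ p) (t : ℝ) (v : L2Seq) :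
    (inner ℂ v (interactionField U hp t v)).re = 0 := by
  rw [interactionField, inner_smul_right, ← (U t).inner_map_map, hU.apply_neg_apply,
    Complex.I_mul_re, im_inner_powL2_self, neg_zero]

theorem exists_isIntegralCurve_interactionField (hU : IsIsometryGroup U B) (hp : 1 ≤ p)
    {φ : L2Seq} (hφ : ‖φ‖ ≤ 1) :
    ∃ v : ℝ → L2Seq, v 0 = φ ∧ (∀ t, ‖v t‖ = ‖φ‖) ∧ IsIntegralCurve v (interactionField U hp) := by
  refine exists_isIntegralCurve_norm_eq (L := 1) (lipschitzOnWith_interactionField hp)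
    (fun x hx => ?_) (fun t x hx => ?_) (fun t x _ => re_inner_interactionField_self hU hp t x) hφ
  · exact continuous_interactionField_comp hU hp continuous_const fun _ =>
      mem_closedBall_zero_iff.1 hx
  · exact norm_interactionField_le_one hp t (mem_closedBall_zero_iff.1 hx)

theorem duhamel_of_isIntegralCurve (hU : IsIsometryGroup U B) (hp : 1 ≤ p) {v : ℝ → L2Seq}
    (hv : IsIntegralCurve v (interactionField U hp)) (hv₁ : ∀ t, ‖v t‖ ≤ 1) (t : ℝ) :
    U t (v t) = U t (v 0) + Complex.I • ∫ s in (0 : ℝ)..t, U (t - s) (powL2 hp (U s (v s))) := by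
  have hint : ∫ s in (0 : ℝ)..t, interactionField U hp s (v s) = v t - v 0 :=
    intervalIntegral.integral_eq_sub_of_hasDerivAt (fun s _ => hv s)
      ((continuous_interactionField_comp hU hp hv.continuous hv₁).intervalIntegrable _ _)
  have hcont := hU.continuous_apply continuous_neg (continuous_powL2_comp hU hp hv.continuous hv₁)
  have hcomm := (U t).toContinuousLinearMap.intervalIntegral_comp_comm
    (hcont.intervalIntegrable (μ := volume) 0 t)
  rw [← sub_eq_iff_eq_add', ← map_sub, ← hint]
  simp only [interactionField, intervalIntegral.integral_smul, map_smul]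
  refine congrArg _ (hcomm.symm.trans (intervalIntegral.integral_congr fun s _ => ?_))
  exact (hU.add_apply t (-s) _).symm

end InteractionPicture

/-! ### Scattering -/

section BlockSup

variable {u : ℝ → L2Seq} {a : ℝ}

/-- The norm of `u` in `L^∞([k, k+1]; ℓ^∞(ℤ))`, with the junk value `0` if `u` is unbounded
there. -/
def blockSup (u : ℝ → L2Seq) (k : ℕ) : ℝ := ⨆ x : Set.Icc (k : ℝ) (k + 1) × ℤ, ‖u x.1 x.2‖

lemma blockSup_nonneg (u : ℝ → L2Seq) (k : ℕ) : 0 ≤ blockSup u k :=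
  Real.iSup_nonneg fun _ => norm_nonneg _

lemma blockSup_le (hu : ∀ t, ‖u t‖ ≤ a) (k : ℕ) : blockSup u k ≤ a :=
  Real.iSup_le (fun _ => ((u _).norm_apply_le _).trans (hu _)) ((norm_nonneg _).trans (hu 0))

lemma norm_apply_le_blockSup (hu : ∀ t, ‖u t‖ ≤ a) {k : ℕ} {t : ℝ}
    (ht : t ∈ Set.Icc (k : ℝ) (k + 1)) (n : ℤ) : ‖u t n‖ ≤ blockSup u k := by
  refine le_ciSup (f := fun x : Set.Icc (k : ℝ) (k + 1) × ℤ => ‖u x.1 x.2‖) ⟨a, ?_⟩ (⟨t, ht⟩, n)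
  rintro _ ⟨x, rfl⟩
  exact ((u _).norm_apply_le _).trans (hu _)

lemma exists_blockSup_le_two_mul (u : ℝ → L2Seq) (k : ℕ) :
    ∃ t ∈ Set.Icc (k : ℝ) (k + 1), ∃ n : ℤ, blockSup u k ≤ 2 * ‖u t n‖ := by
  rcases (blockSup_nonneg u k).eq_or_lt with hzero | hpos
  · exact ⟨k, left_mem_box k, 0, by rw [← hzero]; positivity⟩
  · have : Nonempty (Set.Icc (k : ℝ) (k + 1)) := ⟨⟨k, left_mem_box k⟩⟩
    obtain ⟨x, hx⟩ := exists_lt_of_lt_ciSup (half_lt_self hpos)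
    exact ⟨x.1, x.1.2, x.2, ((div_lt_iff₀' two_pos).1 hx).le⟩

end BlockSup

section Convergence

variable {U : ℝ → L2Seq →ₗᵢ[ℂ] L2Seq} {α p m : ℝ} {r : ℕ} {v : ℝ → L2Seq}

lemma norm_interactionField_le_blockSup_pow (hp : 1 ≤ p) (hrp : (r : ℝ) + 3 ≤ p)
    (hm : m ≤ 1) (hv₀ : ∀ t, ‖v t‖ ≤ m) {k : ℕ} {t : ℝ} (ht : t ∈ Set.Icc (k : ℝ) (k + 1)) :
    ‖interactionField U hp t (v t)‖ ≤ m * blockSup (fun t => U t (v t)) k ^ (r + 2) := by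
  set f := blockSup fun t => U t (v t)
  have hu : ∀ t, ‖U t (v t)‖ ≤ m := fun t => ((U t).norm_map _).trans_le (hv₀ t)
  have hf : 0 ≤ f k := blockSup_nonneg _ k
  have hpow : f k ^ (p - 1) ≤ f k ^ (r + 2) := by
    rw [← Real.rpow_natCast]
    refine Real.rpow_le_rpow_of_exponent_ge' hf ((blockSup_le hu k).trans hm) (by positivity) ?_
    push_cast
    linarith
  calc ‖interactionField U hp t (v t)‖ ≤ f k ^ (p - 1) * ‖v t‖ :=
        norm_interactionField_le hp (norm_apply_le_blockSup hu ht)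
    _ ≤ f k ^ (r + 2) * m := mul_le_mul hpow (hv₀ t) (norm_nonneg _) (by positivity)
    _ = m * f k ^ (r + 2) := mul_comm _ _

lemma isBoxOscBound_of_isIntegralCurve (hp : 1 ≤ p) (hrp : (r : ℝ) + 3 ≤ p) (hm : m ≤ 1)
    (hv₀ : ∀ t, ‖v t‖ ≤ m) (hv : IsIntegralCurve v (interactionField U hp)) :
    IsBoxOscBound v fun k => m * blockSup (fun t => U t (v t)) k ^ (r + 2) := by
  intro k t ht t' ht'
  have hderiv : ∀ x ∈ Set.Icc (k : ℝ) (k + 1), ‖interactionField U hp x (v x)‖ ≤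
      m * blockSup (fun t => U t (v t)) k ^ (r + 2) :=
    fun x hx => norm_interactionField_le_blockSup_pow hp hrp hm hv₀ hx
  refine ((convex_Icc _ _).norm_image_sub_le_of_norm_hasDerivWithin_le
    (fun x _ => (hv x).hasDerivWithinAt) hderiv ht ht').trans ?_
  have hlen : ‖t' - t‖ ≤ 1 := by
    rw [Real.norm_eq_abs, abs_le]
    constructor <;> linarith [ht.1, ht.2, ht'.1, ht'.2]
  exact mul_le_of_le_one_right ((norm_nonneg _).trans (hderiv t ht)) hlen

theorem HasKernelDecay.exists_tendsto_of_isIntegralCurve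
    (h : HasKernelDecay α (2 / ((r : ℝ) + 2))) (hα : 0 < α) (hr : 0 < r) (hp : 1 ≤ p)
    (hrp : (r : ℝ) + 3 ≤ p) :
    ∃ δ, 0 < δ ∧ δ ≤ 1 ∧ ∀ m < δ, ∀ v : ℝ → L2Seq, (∀ t, ‖v t‖ ≤ m) →
      IsIntegralCurve v (interactionField (propagator hα) hp) → ∃ l, Tendsto v atTop (𝓝 l) := by
  obtain ⟨A, hA, hgram⟩ := h.exists_isGramBounded hα
  set Q := Real.sqrt (22 * A)
  have hQ : 0 ≤ Q := Real.sqrt_nonneg _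
  refine ⟨1 / (12 * (Q + 1)), by positivity, ?_, fun m hm v hv₀ hv => ?_⟩
  · rw [div_le_one (by positivity)]
    linarith
  have hm₀ : 0 ≤ m := (norm_nonneg _).trans (hv₀ 0)
  have hmQ : m * (12 * (Q + 1)) < 1 := (lt_div_iff₀ (by positivity)).1 hm
  have hm_half : m ≤ 1 / 2 := by nlinarith [mul_nonneg hm₀ hQ]
  have hAm : 2 * Q * (3 * m) ≤ 1 / 2 := by nlinarith [mul_nonneg hm₀ hQ]
  choose τ hτ ν hν using exists_blockSup_le_two_mul fun t => propagator hα t (v t)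
  refine (hgram τ ν hτ).exists_tendsto hr hA (blockSup_nonneg _) hm_half hAm
    (blockSup_le fun t => ((propagator hα t).norm_map _).trans_le (hv₀ t)) hv₀
    (isBoxOscBound_of_isIntegralCurve hp hrp (hm_half.trans (by norm_num)) hv₀ hv) hτ fun j => ?_
  rw [inner_propagator_neg_single]
  exact hν j

end Convergence

section SequenceForm

variable {α p : ℝ} {v : ℝ → L2Seq}

lemma L2Seq.norm_sq_eq_tsum (x : L2Seq) : ‖x‖ ^ 2 = ∑' n, ‖x n‖ ^ 2 := by
  simpa using lp.norm_rpow_eq_tsum (p := 2) (by norm_num) x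

lemma L2Seq.summable_norm_sq (x : L2Seq) : Summable fun n => ‖x n‖ ^ 2 := by
  simpa using (lp.memℓp x).summable (by norm_num)

/-- The element of `ℓ²(ℤ)` given by a square-summable sequence. -/
def L2Seq.ofSummable (x : ℤ → ℂ) (hx : Summable fun n => ‖x n‖ ^ 2) : L2Seq :=
  ⟨x, memℓp_gen (by simpa using hx)⟩

lemma tsum_norm_propagator_sub_Uprop_sq (hα : 0 < α) (t : ℝ) (x y : L2Seq) :
    ∑' n : ℤ, ‖propagator hα t x n - Uprop α t y n‖ ^ 2 = ‖x - y‖ ^ 2 := by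
  rw [← (propagator hα t).norm_map, L2Seq.norm_sq_eq_tsum, map_sub]
  exact tsum_congr fun n => by rw [← propagator_apply hα, lp.coeFn_sub, Pi.sub_apply]

lemma tendsto_tsum_norm_sub_Uprop_sq_iff (hα : 0 < α) (x : L2Seq) :
    Tendsto (fun t => ∑' n : ℤ, ‖propagator hα t (v t) n - Uprop α t x n‖ ^ 2) atTop (𝓝 0) ↔
      Tendsto v atTop (𝓝 x) := by
  simp only [tsum_norm_propagator_sub_Uprop_sq]
  rw [tendsto_iff_norm_sub_tendsto_zero (f := v)]
  constructor <;> intro h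
  · simpa only [Real.sqrt_sq (norm_nonneg _), Real.sqrt_zero] using h.sqrt
  · simpa using h.pow 2

lemma tendsto_tsum_norm_sub_sq {u : ℝ → L2Seq} (hu : Continuous u) (t₀ : ℝ) :
    Tendsto (fun t => ∑' n : ℤ, ‖u t n - u t₀ n‖ ^ 2) (𝓝 t₀) (𝓝 0) := by
  have hcont : Continuous fun t => ‖u t - u t₀‖ ^ 2 := by fun_prop
  have hlim := hcont.tendsto t₀
  simp only [L2Seq.norm_sq_eq_tsum, sub_self] at hlim
  simpa using hlim

lemma propagator_apply_eq_duhamel (hα : 0 < α) (hp : 1 ≤ p)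
    (hv : IsIntegralCurve v (interactionField (propagator hα) hp)) (hv₁ : ∀ t, ‖v t‖ ≤ 1)
    (t : ℝ) (n : ℤ) :
    propagator hα t (v t) n = Uprop α t (v 0) n + Complex.I * ∫ s in (0 : ℝ)..t,
      Uprop α (t - s) (fun m => (‖propagator hα s (v s) m‖ ^ (p - 1) : ℝ) *
        propagator hα s (v s) m) n := by
  have hU := isIsometryGroup_propagator hα
  have hcont : Continuous fun s => propagator hα (t - s) (powL2 hp (propagator hα s (v s))) :=
    hU.continuous_apply (by fun_prop) (continuous_powL2_comp hU hp hv.continuous hv₁)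
  have hcomm := (lp.evalCLM ℂ (fun _ : ℤ => ℂ) 2 n).intervalIntegral_comp_comm
    (hcont.intervalIntegrable (μ := volume) 0 t)
  rw [duhamel_of_isIntegralCurve hU hp hv hv₁ t, lp.coeFn_add, Pi.add_apply, lp.coeFn_smul,
    Pi.smul_apply, smul_eq_mul, propagator_apply]
  refine congrArg (_ + Complex.I * ·) (hcomm.symm.trans ?_)
  exact intervalIntegral.integral_congr fun s _ => propagator_apply hα _ _ _

theorem isGlobalSolution_of_isIntegralCurve (hα : 0 < α) (hp : 1 ≤ p)
    (hv : IsIntegralCurve v (interactionField (propagator hα) hp)) (hv₁ : ∀ t, ‖v t‖ ≤ 1) :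
    IsGlobalSolution α p (v 0) fun t => propagator hα t (v t) :=
  have hcont := (isIsometryGroup_propagator hα).continuous_apply continuous_id hv.continuous
  ⟨fun _ _ => L2Seq.summable_norm_sq _,
    fun t₀ _ => (tendsto_tsum_norm_sub_sq hcont t₀).mono_left nhdsWithin_le_nhds,
    fun t _ n => propagator_apply_eq_duhamel hα hp hv hv₁ t n⟩

theorem existsUnique_asymptoticState (hα : 0 < α) {M : ℝ} (hM : ∀ t, ‖v t‖ = M) {l : L2Seq}
    (hl : Tendsto v atTop (𝓝 l)) :
    ∃! x : ℤ → ℂ, Summable (fun n => ‖x n‖ ^ 2) ∧ (∑' n, ‖x n‖ ^ 2) = M ^ 2 ∧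
      Tendsto (fun t => ∑' n : ℤ, ‖propagator hα t (v t) n - Uprop α t x n‖ ^ 2) atTop (𝓝 0) := by
  refine ⟨l, ⟨l.summable_norm_sq, ?_, (tendsto_tsum_norm_sub_Uprop_sq_iff hα l).2 hl⟩, ?_⟩
  · have hnorm : ‖l‖ = M :=
      tendsto_nhds_unique hl.norm (by simp only [hM]; exact tendsto_const_nhds)
    rw [← L2Seq.norm_sq_eq_tsum, hnorm]
  · rintro y ⟨hy, -, hlim⟩
    have hy_lim := (tendsto_tsum_norm_sub_Uprop_sq_iff hα (L2Seq.ofSummable y hy)).1 hlim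
    exact congrArg Subtype.val (tendsto_nhds_unique hy_lim hl)

theorem HasKernelDecay.exists_scattering {r : ℕ} (h : HasKernelDecay α (2 / ((r : ℝ) + 2)))
    (hα : 0 < α) (hr : 0 < r) (hrp : (r : ℝ) + 3 ≤ p) :
    ∃ δ : ℝ, 0 < δ ∧
      ∀ φ : ℤ → ℂ, Summable (fun n : ℤ => ‖φ n‖ ^ 2) →
        Real.sqrt (∑' n : ℤ, ‖φ n‖ ^ 2) < δ →
        ∃ u : ℝ → ℤ → ℂ, IsGlobalSolution α p φ u ∧
          ∃! uplus : ℤ → ℂ,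
            Summable (fun n : ℤ => ‖uplus n‖ ^ 2) ∧
            (∑' n : ℤ, ‖uplus n‖ ^ 2) = (∑' n : ℤ, ‖φ n‖ ^ 2) ∧
            Tendsto (fun t : ℝ => ∑' n : ℤ, ‖u t n - Uprop α t uplus n‖ ^ 2)
              atTop (𝓝 0) := by
  have hp : 1 ≤ p := by linarith [(Nat.cast_nonneg r : (0 : ℝ) ≤ r)]
  obtain ⟨δ, hδ, hδ₁, hconv⟩ := h.exists_tendsto_of_isIntegralCurve hα hr hp hrp
  refine ⟨δ, hδ, fun φ hφ hφδ => ?_⟩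
  set x := L2Seq.ofSummable φ hφ
  have hsq : ∑' n : ℤ, ‖φ n‖ ^ 2 = ‖x‖ ^ 2 := x.norm_sq_eq_tsum.symm
  rw [hsq, Real.sqrt_sq (norm_nonneg _)] at hφδ
  have hx₁ : ‖x‖ ≤ 1 := hφδ.le.trans hδ₁
  obtain ⟨v, hv_zero, hv_norm, hv⟩ :=
    exists_isIntegralCurve_interactionField (isIsometryGroup_propagator hα) hp hx₁
  obtain ⟨l, hl⟩ := hconv ‖x‖ hφδ v (fun t => (hv_norm t).le) hv
  have hsol := isGlobalSolution_of_isIntegralCurve hα hp hv fun t => (hv_norm t).trans_le hx₁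
  rw [hv_zero] at hsol
  refine ⟨_, hsol, ?_⟩
  rw [hsq]
  exact existsUnique_asymptoticState hα hv_norm hl

end SequenceForm

theorem stmt19 (α p : ℝ)
    (hcase : (0 < α ∧ α ≤ 1 ∧ 5 ≤ p) ∨ (1 < α ∧ 7 ≤ p)) :
    ∃ δ : ℝ, 0 < δ ∧
      ∀ φ : ℤ → ℂ, Summable (fun n : ℤ => ‖φ n‖ ^ 2) →
        Real.sqrt (∑' n : ℤ, ‖φ n‖ ^ 2) < δ →
        ∃ u : ℝ → ℤ → ℂ, IsGlobalSolution α p φ u ∧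
          ∃! uplus : ℤ → ℂ,
            Summable (fun n : ℤ => ‖uplus n‖ ^ 2) ∧
            (∑' n : ℤ, ‖uplus n‖ ^ 2) = (∑' n : ℤ, ‖φ n‖ ^ 2) ∧
            Tendsto (fun t : ℝ => ∑' n : ℤ, ‖u t n - Uprop α t uplus n‖ ^ 2)
              atTop (𝓝 0) := by
  rcases hcase with ⟨hα, hα₁, hp⟩ | ⟨hα, hp⟩
  · refine HasKernelDecay.exists_scattering (r := 2) ?_ hα two_pos (by norm_num; linarith)
    convert hasKernelDecay_half hα hα₁ using 1
    norm_num
  · refine HasKernelDecay.exists_scattering (r := 4) ?_ (by linarith) four_pos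
      (by norm_num; linarith)
    convert hasKernelDecay_third hα using 1
    norm_num
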